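/- arXiv:2001.03938 — 2 statements merged into one kernel-verified Lean document; each statement's English description precedes it below -/
import Mathlib

section
/- For the edge ideal I(G) of a simple graph G, the Green–Lazarsfeld index of I(G) equals the length of the shortest induced cycle of length greater than 3 in the complement graph of G, minus 3 (and is infinite if no such cycle exists). -/
open Finsupp

namespace EP

variable (K : Type) [Field K]

/-! ## Simplicial chains over a linearly ordered vertex set -/

variable {V : Type} [Fintype V] [DecidableEq V] [LinearOrder V]

/-- Boundary of a single (oriented) face, given as a finset. -/
noncomputable def bdFace (s : Finset V) : Finset V →₀ K :=
  ∑ v ∈ s, ((-1 : K) ^ ((s.filter (fun w => w < v)).card)) • Finsupp.single (s.erase v) 1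

/-- The simplicial boundary map on the free module on all finsets of vertices
(the augmented oriented chain complex, with the empty set playing the role of
the `(-1)`-dimensional face). -/
noncomputable def bdS : (Finset V →₀ K) →ₗ[K] (Finset V →₀ K) :=
  Finsupp.lsum K fun s => LinearMap.toSpanSingleton K (Finset V →₀ K) (bdFace K s)

/-- Chains supported on faces of a complex `Δ` having `k` vertices. -/
noncomputable def faceSpan (Δ : Set (Finset V)) (k : ℕ) : Submodule K (Finset V →₀ K) :=
  Submodule.span K {c | ∃ F ∈ Δ, F.card = k ∧ c = Finsupp.single F 1}

/-- Dimension of the `d`-th reduced simplicial homology of `Δ` over `K`. -/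
noncomputable def redHomRank (Δ : Set (Finset V)) (d : ℕ) : ℕ :=
  Module.finrank K ↥(faceSpan K Δ (d+1) ⊓ LinearMap.ker (bdS K)) -
    Module.finrank K
      ↥(Submodule.map (bdS K) (faceSpan K Δ (d+2)) ⊓
          (faceSpan K Δ (d+1) ⊓ LinearMap.ker (bdS K)))

/-- The flag complex of a graph: faces are the cliques. -/
def flagComplex (G : SimpleGraph V) : Set (Finset V) :=
  {F | ∀ i ∈ F, ∀ j ∈ F, i ≠ j → G.Adj i j}

/-- The flag complex of the induced subgraph of `G` on `W`. -/
def flagComplexOn (G : SimpleGraph V) (W : Finset V) : Set (Finset V) :=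
  {F | (F : Set V) ⊆ (W : Set V) ∧ ∀ i ∈ F, ∀ j ∈ F, i ≠ j → G.Adj i j}

/-- The induced subcomplex of `Δ` on a vertex subset `W`. -/
def restrictComplex (Δ : Set (Finset V)) (W : Finset V) : Set (Finset V) :=
  {F | F ∈ Δ ∧ F ⊆ W}

/-- The oriented `1`-chain `[a,b]` (so `[a,b] = -[b,a]`). -/
noncomputable def edgeChain (a b : V) : Finset V →₀ K :=
  if a < b then Finsupp.single {a, b} 1 else -Finsupp.single {a, b} 1

/-- The oriented `2`-chain `[x,y,z]`, antisymmetric under transpositions. -/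
noncomputable def triChain (x y z : V) : Finset V →₀ K :=
  if (x < y ∧ y < z) ∨ (y < z ∧ z < x) ∨ (z < x ∧ x < y)
  then Finsupp.single {x, y, z} 1
  else -Finsupp.single {x, y, z} 1

/-! ## Graded Betti numbers of monomial ideals via the Taylor complex -/

variable {n : ℕ}

/-- The multidegree lcm of the monomial generators indexed by `S`. -/
def mlcm {r : ℕ} (g : Fin r → (Fin n → ℕ)) (S : Finset (Fin r)) : Fin n → ℕ :=
  fun x => S.sup fun k => g k x

/-- The differential of the Taylor complex tensored with the residue field `K`. -/
noncomputable def bdT {r : ℕ} (g : Fin r → (Fin n → ℕ)) :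
    (Finset (Fin r) →₀ K) →ₗ[K] (Finset (Fin r) →₀ K) :=
  Finsupp.lsum K fun S => LinearMap.toSpanSingleton K (Finset (Fin r) →₀ K)
    (∑ k ∈ S, if mlcm g (S.erase k) = mlcm g S
      then ((-1 : K) ^ ((S.filter (fun j => j < k)).card)) • Finsupp.single (S.erase k) (1 : K)
      else 0)

/-- The degree-`j` strand of the Taylor complex in homological degree `p`. -/
noncomputable def strand {r : ℕ} (g : Fin r → (Fin n → ℕ)) (p j : ℕ) :
    Submodule K (Finset (Fin r) →₀ K) :=
  Submodule.span K
    {c | ∃ S : Finset (Fin r), S.card = p ∧ (∑ x, mlcm g S x) = j ∧ c = Finsupp.single S 1}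

/-- `dim_K Tor_p(S/I, K)_j`, computed from the Taylor complex on the monomial
generators `g` of `I`. -/
noncomputable def torRank {r : ℕ} (g : Fin r → (Fin n → ℕ)) (p j : ℕ) : ℕ :=
  Module.finrank K ↥(strand K g p j ⊓ LinearMap.ker (bdT K g)) -
    Module.finrank K
      ↥(Submodule.map (bdT K g) (strand K g (p+1) j) ⊓
          (strand K g p j ⊓ LinearMap.ker (bdT K g)))

/-- The graded Betti number `β_{i,j}(I)` of the monomial ideal `I` generated by
the monomials with exponent vectors `g`, i.e. `dim_K Tor_i(I, K)_j = dim_K Tor_{i+1}(S/I, K)_j`. -/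
noncomputable def betti {r : ℕ} (g : Fin r → (Fin n → ℕ)) (i j : ℕ) : ℕ :=
  torRank K g (i+1) j

/-- The monomial with exponent vector `a`. -/
noncomputable def mono (a : Fin n → ℕ) : MvPolynomial (Fin n) K :=
  MvPolynomial.monomial (Finsupp.equivFunOnFinite.symm a) 1

/-- `g` is a list of exponent vectors of monomials generating the ideal `I`. -/
def IsGenSet {r : ℕ} (g : Fin r → (Fin n → ℕ)) (I : Ideal (MvPolynomial (Fin n) K)) : Prop :=
  Ideal.span (Set.range fun k => mono K (g k)) = I

/-- The ideal (generated by the monomials with exponent vectors `g`) has a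
`d`-linear resolution. -/
def HasLinRes {r : ℕ} (g : Fin r → (Fin n → ℕ)) (d : ℕ) : Prop :=
  ∀ i j, betti K g i j ≠ 0 → j = i + d

/-- Castelnuovo–Mumford regularity of a monomial ideal, from its Betti numbers. -/
noncomputable def regT {r : ℕ} (g : Fin r → (Fin n → ℕ)) : ℕ :=
  sSup {d | ∃ i j, betti K g i j ≠ 0 ∧ j = i + d}

/-! ## Edge ideals -/

/-- The edge ideal of a simple graph. -/
noncomputable def edgeIdeal (G : SimpleGraph (Fin n)) : Ideal (MvPolynomial (Fin n) K) :=
  Ideal.span {m | ∃ i j : Fin n, G.Adj i j ∧ m = MvPolynomial.X i * MvPolynomial.X j}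

/-- The edge set of `G` as a finset. -/
noncomputable def edgeFins (G : SimpleGraph (Fin n)) : Finset (Sym2 (Fin n)) :=
  letI : Fintype ↥G.edgeSet := Fintype.ofFinite _
  G.edgeFinset

/-- The canonical monomial (exponent vector) generators of the edge ideal of `G`. -/
noncomputable def edgeGens (G : SimpleGraph (Fin n)) : Fin (edgeFins G).card → (Fin n → ℕ) :=
  fun k x => if x ∈ ((edgeFins G).equivFin.symm k : Sym2 (Fin n)) then 1 else 0

/-- The graded Betti numbers `β_{i,j}(I(G))` of the edge ideal of `G` over `K`. -/
noncomputable def gBetti (G : SimpleGraph (Fin n)) (i j : ℕ) : ℕ :=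
  betti K (edgeGens G) i j

/-- The projective dimension `pd(I(G))` of the edge ideal of `G` over `K`. -/
noncomputable def gPd (G : SimpleGraph (Fin n)) : ℕ :=
  sSup {i | ∃ j, gBetti K G i j ≠ 0}

/-- The Green–Lazarsfeld index of the edge ideal of `G` over `K`
(`⊤` iff the ideal has a linear resolution). -/
noncomputable def gIndex (G : SimpleGraph (Fin n)) : ℕ∞ :=
  sInf {N : ℕ∞ | ∃ i j : ℕ, N = (i : ℕ∞) ∧ i + 2 < j ∧ gBetti K G i j ≠ 0}

/-- The regularity of the edge ideal of `G` over `K`. -/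
noncomputable def gReg (G : SimpleGraph (Fin n)) : ℕ :=
  sSup {d | ∃ i j, gBetti K G i j ≠ 0 ∧ j = i + d}

/-- The edge ideal of `G` has a (2-)linear resolution over `K`. -/
def gLinRes (G : SimpleGraph (Fin n)) : Prop :=
  ∀ i j, gBetti K G i j ≠ 0 → j = i + 2

/-- The edge ideal of `G` has almost maximal finite index over `K`:
`index(I(G)) = pd(I(G)) - 1` (with the index finite). -/
def AMFI (G : SimpleGraph (Fin n)) : Prop :=
  gIndex K G + 1 = (gPd K G : ℕ∞)

/-! ## Graph-theoretic notions -/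

/-- `H` contains an induced (chordless) cycle of length `l`. -/
def HasInducedCycle {W : Type} (H : SimpleGraph W) (l : ℕ) : Prop :=
  ∃ f : ZMod l → W, Function.Injective f ∧
    ∀ i j : ZMod l, H.Adj (f i) (f j) ↔ (j = i + 1 ∨ i = j + 1)

/-- `H` is chordal: it has no induced cycle of length greater than `3`. -/
def Chordal {W : Type} (H : SimpleGraph W) : Prop :=
  ∀ l : ℕ, 3 < l → ¬ HasInducedCycle H l

end EP



set_option linter.unusedSectionVars false

namespace GLI

section Chain
variable {K : Type} [Field K] {E : Type} [Fintype E] [LinearOrder E]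

/-- incidence sign -/
def sgn (K : Type) [Field K] {E : Type} [LinearOrder E] (e : E) (T : Finset E) : K :=
  (-1) ^ ((T.filter (fun w => w < e)).card)

/-- boundary, pointwise -/
def dd (x : Finset E → K) (T : Finset E) : K := ∑ e ∈ Tᶜ, sgn K e T * x (insert e T)

lemma sgn_sq (e : E) (T : Finset E) : sgn K e T * sgn K e T = 1 := by
  unfold sgn; rw [← pow_add, ← two_mul, pow_mul]; simp

lemma sgn_anti_aux {e f : E} {T : Finset E} (h : e < f) (he : e ∉ T) :
    sgn K e T * sgn K f (insert e T) + sgn K f T * sgn K e (insert f T) = 0 := by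
  have h1 : (insert e T).filter (fun w => w < f) = insert e (T.filter (fun w => w < f)) := by
    rw [Finset.filter_insert, if_pos h]
  have h2 : (insert f T).filter (fun w => w < e) = T.filter (fun w => w < e) := by
    rw [Finset.filter_insert, if_neg (not_lt.2 h.le)]
  unfold sgn
  rw [h1, h2, Finset.card_insert_of_notMem (by simp [he])]
  ring

lemma sgn_anti {e f : E} {T : Finset E} (h : e ≠ f) (he : e ∉ T) (hf : f ∉ T) :
    sgn K e T * sgn K f (insert e T) + sgn K f T * sgn K e (insert f T) = 0 := by
  rcases lt_or_gt_of_ne h with h | h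
  · exact sgn_anti_aux h he
  · rw [add_comm]; exact sgn_anti_aux h hf

lemma dd_dd (x : Finset E → K) (T : Finset E) : dd (dd x) T = 0 := by
  unfold dd
  simp_rw [Finset.mul_sum]
  rw [Finset.sum_sigma']
  refine Finset.sum_involution (fun p _ => ⟨p.2, p.1⟩) ?_ ?_ ?_ ?_
  · rintro ⟨e, f⟩ hp
    simp only [Finset.mem_sigma, Finset.mem_compl, Finset.mem_insert, not_or] at hp
    obtain ⟨he, hfe, hf⟩ := hp
    have := sgn_anti (K := K) (Ne.symm hfe) he hf
    simp only
    rw [Finset.insert_comm f e T, ← mul_assoc, ← mul_assoc, ← add_mul, this, zero_mul]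
  · rintro ⟨e, f⟩ hp _ heq
    simp only [Finset.mem_sigma, Finset.mem_compl, Finset.mem_insert, not_or] at hp
    simp only [Sigma.mk.injEq] at heq
    exact hp.2.1 heq.1
  · rintro ⟨e, f⟩ hp
    simp only [Finset.mem_sigma, Finset.mem_compl, Finset.mem_insert, not_or] at hp ⊢
    exact ⟨hp.2.2, fun h => hp.2.1 h.symm, hp.1⟩
  · rintro ⟨e, f⟩ hp
    rfl

lemma dd_add (x y : Finset E → K) (T : Finset E) :
    dd (fun S => x S + y S) T = dd x T + dd y T := by
  unfold dd; rw [← Finset.sum_add_distrib]; exact Finset.sum_congr rfl fun _ _ => by ring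

lemma dd_sub (x y : Finset E → K) (T : Finset E) :
    dd (fun S => x S - y S) T = dd x T - dd y T := by
  unfold dd; rw [← Finset.sum_sub_distrib]; exact Finset.sum_congr rfl fun _ _ => by ring

lemma dd_congr {x y : Finset E → K} {T : Finset E}
    (h : ∀ e, e ∉ T → x (insert e T) = y (insert e T)) : dd x T = dd y T := by
  unfold dd; exact Finset.sum_congr rfl fun e he => by rw [h e (by simpa using he)]

lemma dd_zero {x : Finset E → K} {T : Finset E}
    (h : ∀ e, e ∉ T → x (insert e T) = 0) : dd x T = 0 := by
  unfold dd; exact Finset.sum_eq_zero fun e he => by rw [h e (by simpa using he), mul_zero]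

lemma dd_single {x : Finset E → K} {T : Finset E} {e : E} (he : e ∉ T)
    (h : ∀ f, f ∉ T → f ≠ e → x (insert f T) = 0) : dd x T = sgn K e T * x (insert e T) := by
  unfold dd
  rw [Finset.sum_eq_single e]
  · intro f hf hfe
    rw [h f (by simpa using hf) hfe, mul_zero]
  · intro h'; simp [he] at h'

/-- x is a chain of the family F in degree p -/
def Sup (F : Finset E → Prop) (p : ℤ) (x : Finset E → K) : Prop :=
  ∀ T, x T ≠ 0 → F T ∧ (T.card : ℤ) = p

/-- Exactness of the chains of the family F in degree p -/
def Ex (K : Type) [Field K] {E : Type} [Fintype E] [LinearOrder E]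
    (F : Finset E → Prop) (p : ℤ) : Prop :=
  ∀ x : Finset E → K, Sup F p x → (∀ T, F T → dd x T = 0) →
    ∃ y : Finset E → K, Sup F (p+1) y ∧ ∀ T, F T → dd y T = x T

open Classical in
/-- restriction -/
noncomputable def res (F : Finset E → Prop) (x : Finset E → K) (T : Finset E) : K :=
  if F T then x T else 0

lemma res_pos {F : Finset E → Prop} {x : Finset E → K} {T : Finset E} (h : F T) :
    res F x T = x T := by simp [res, h]
lemma res_neg {F : Finset E → Prop} {x : Finset E → K} {T : Finset E} (h : ¬ F T) :
    res F x T = 0 := by simp [res, h]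

def Convex (F : Finset E → Prop) : Prop :=
  ∀ T e f, F T → F (insert f (insert e T)) → F (insert e T)

lemma Sup.eq_zero {F : Finset E → Prop} {p : ℤ} {x : Finset E → K} (h : Sup F p x)
    {T : Finset E} (hT : ¬ F T) : x T = 0 := by
  by_contra h'; exact hT (h T h').1

lemma sup_res_dd {F A : Finset E → Prop} {p : ℤ} {x : Finset E → K} (h : Sup F (p+1) x) :
    Sup A p (res A (dd x)) := by
  intro T hT
  have hA : A T := by by_contra hc; exact hT (res_neg hc)
  refine ⟨hA, ?_⟩
  rw [res_pos hA] at hT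
  by_contra hc
  apply hT
  apply dd_zero
  intro e he
  by_contra h'
  have := (h _ h').2
  rw [Finset.card_insert_of_notMem he] at this
  push_cast at this
  exact hc (by linarith)

lemma sup_res {F A : Finset E → Prop} {p : ℤ} {x : Finset E → K} (h : Sup F p x) :
    Sup A p (res A x) := by
  intro T hT
  have hA : A T := by by_contra hc; exact hT (res_neg hc)
  rw [res_pos hA] at hT
  exact ⟨hA, (h T hT).2⟩

lemma Sup.mono {F A : Finset E → Prop} {p : ℤ} {x : Finset E → K} (h : Sup A p x)
    (hA : ∀ T, A T → F T) : Sup F p x := fun T hT => ⟨hA _ (h T hT).1, (h T hT).2⟩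

lemma Sup.add {F : Finset E → Prop} {p : ℤ} {x y : Finset E → K} (h : Sup F p x)
    (h' : Sup F p y) : Sup F p (fun S => x S + y S) := by
  intro T hT
  by_cases hx : x T = 0
  · by_cases hy : y T = 0
    · simp [hx, hy] at hT
    · exact h' T hy
  · exact h T hx

lemma Sup.sub {F : Finset E → Prop} {p : ℤ} {x y : Finset E → K} (h : Sup F p x)
    (h' : Sup F p y) : Sup F p (fun S => x S - y S) := by
  intro T hT
  by_cases hx : x T = 0
  · by_cases hy : y T = 0
    · simp [hx, hy] at hT
    · exact h' T hy
  · exact h T hx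

lemma dd_res_dd {F : Finset E → Prop} (hF : Convex F) {p : ℤ} {x : Finset E → K}
    (h : Sup F p x) {T : Finset E} (hT : F T) : dd (res F (dd x)) T = 0 := by
  rw [← dd_dd x T]
  apply dd_congr
  intro e he
  by_cases hc : F (insert e T)
  · rw [res_pos hc]
  · rw [res_neg hc]
    symm
    apply dd_zero
    intro f hf
    apply h.eq_zero
    exact fun h' => hc (hF T e f hT h')

structure Split (F A B : Finset E → Prop) : Prop where
  conv : Convex F
  iff : ∀ T, F T ↔ A T ∨ B T
  disj : ∀ T, A T → B T → False
  up : ∀ T e, B T → F (insert e T) → B (insert e T)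

variable {F A B : Finset E → Prop}

lemma Split.dd_res (h : Split F A B) {p : ℤ} {x : Finset E → K} (hx : Sup F p x)
    {T : Finset E} (hT : B T) : dd (res B x) T = dd x T := by
  apply dd_congr
  intro e _
  by_cases hc : B (insert e T)
  · rw [res_pos hc]
  · rw [res_neg hc]; symm; apply hx.eq_zero
    exact fun hF => hc (h.up T e hT hF)

lemma Split.dd_A (h : Split F A B) {p : ℤ} {x : Finset E → K} (hx : Sup A p x)
    {T : Finset E} (hT : B T) : dd x T = 0 := by
  apply dd_zero
  intro e _
  apply hx.eq_zero
  intro hA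
  exact h.disj _ hA (h.up T e hT ((h.iff _).2 (Or.inl hA)))

lemma Split.L1 (h : Split F A B) {p : ℤ} (hA : Ex K A p) (hB : Ex K B p) : Ex K F p := by
  intro x hx hc
  obtain ⟨yB, hyB, hyB'⟩ := hB (res B x) (sup_res hx) (fun T hT => by
    rw [h.dd_res hx hT]; exact hc T ((h.iff T).2 (Or.inr hT)))
  have hyF : Sup F (p+1) yB := hyB.mono fun T hT => (h.iff T).2 (Or.inr hT)
  have hz : Sup F p (fun S => x S - res F (dd yB) S) := hx.sub (sup_res_dd hyB)
  have hzA : Sup A p (fun S => x S - res F (dd yB) S) := by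
    intro T hT
    obtain ⟨h1, h2⟩ := hz T hT
    refine ⟨?_, h2⟩
    rcases (h.iff T).1 h1 with h3 | h3
    · exact h3
    · exfalso; apply hT
      simp only
      rw [res_pos h1, hyB' T h3, res_pos h3, sub_self]
  obtain ⟨yA, hyA, hyA'⟩ := hA _ hzA (fun T hT => by
    have hTF := (h.iff T).2 (Or.inl hT)
    rw [dd_sub, hc T hTF, dd_res_dd h.conv hyF hTF, sub_self])
  refine ⟨fun S => yA S + yB S, (hyA.mono fun T hT => (h.iff T).2 (Or.inl hT)).add hyF, ?_⟩
  intro T hT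
  rw [dd_add]
  rcases (h.iff T).1 hT with h3 | h3
  · rw [hyA' T h3, res_pos hT]; ring
  · rw [h.dd_A hyA h3, hyB' T h3, res_pos h3, zero_add]

lemma Split.L2 (h : Split F A B) {p : ℤ} (hF : Ex K F p) (hA : Ex K A (p-1)) : Ex K B p := by
  intro x hx hc
  have hxF : Sup F p x := hx.mono fun T hT => (h.iff T).2 (Or.inr hT)
  have hx' : Sup B (p - 1 + 1) x := by rw [sub_add_cancel]; exact hx
  have heq : res A (dd x) = res F (dd x) := by
    funext T
    by_cases hT : F T
    · rw [res_pos hT]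
      rcases (h.iff T).1 hT with h3 | h3
      · rw [res_pos h3]
      · rw [hc T h3, res_neg (fun h4 => h.disj T h4 h3)]
    · rw [res_neg hT, res_neg (fun h4 => hT ((h.iff T).2 (Or.inl h4)))]
  obtain ⟨a, ha, ha'⟩ := hA (res A (dd x)) (sup_res_dd hx') (fun T hT => by
    rw [heq]; exact dd_res_dd h.conv hxF ((h.iff T).2 (Or.inl hT)))
  rw [sub_add_cancel] at ha
  have haF : Sup F p a := ha.mono fun T hT => (h.iff T).2 (Or.inl hT)
  obtain ⟨y, hy, hy'⟩ := hF (fun S => x S - a S) (hxF.sub haF) (fun T hT => by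
    rw [dd_sub]
    rcases (h.iff T).1 hT with h3 | h3
    · rw [ha' T h3, res_pos h3, sub_self]
    · rw [hc T h3, h.dd_A ha h3, sub_self])
  refine ⟨res B y, sup_res hy, fun T hT => ?_⟩
  rw [h.dd_res hy hT, hy' T ((h.iff T).2 (Or.inr hT)), ha.eq_zero (fun h4 => h.disj T h4 hT),
    sub_zero]

lemma Split.L3 (h : Split F A B) {p : ℤ} (hB : Ex K B (p+1)) (hF : Ex K F p) : Ex K A p := by
  intro x hx hc
  have hxF : Sup F p x := hx.mono fun T hT => (h.iff T).2 (Or.inl hT)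
  obtain ⟨y, hy, hy'⟩ := hF x hxF (fun T hT => by
    rcases (h.iff T).1 hT with h3 | h3
    · exact hc T h3
    · exact h.dd_A hx h3)
  obtain ⟨z, hz, hz'⟩ := hB (res B y) (sup_res hy) (fun T hT => by
    rw [h.dd_res hy hT, hy' T ((h.iff T).2 (Or.inr hT)),
      hx.eq_zero (fun h4 => h.disj T h4 hT)])
  have hzF : Sup F (p+1+1) z := hz.mono fun T hT => (h.iff T).2 (Or.inr hT)
  refine ⟨fun S => y S - res F (dd z) S, ?_, ?_⟩
  · intro T hT
    obtain ⟨h1, h2⟩ := (hy.sub (sup_res_dd hzF)) T hT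
    refine ⟨?_, h2⟩
    rcases (h.iff T).1 h1 with h3 | h3
    · exact h3
    · exfalso; apply hT
      simp only
      rw [res_pos h1, hz' T h3, res_pos h3, sub_self]
  · intro T hT
    have hTF := (h.iff T).2 (Or.inl hT)
    rw [dd_sub, hy' T hTF, dd_res_dd h.conv hzF hTF, sub_zero]

lemma ex_cone (hF : Convex F) (e : E) (he : ∀ T, e ∉ T → (F T ↔ F (insert e T))) (p : ℤ) :
    Ex K F p := by
  intro x hx hc
  let y : Finset E → K := fun T => if e ∈ T then sgn K e (T.erase e) * x (T.erase e) else 0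
  have hy : Sup F (p+1) y := by
    intro T hT
    by_cases heT : e ∈ T
    · simp only [y, if_pos heT] at hT
      have h1 := hx _ (right_ne_zero_of_mul hT)
      constructor
      · have := (he _ (Finset.notMem_erase e T)).1 h1.1
        rwa [Finset.insert_erase heT] at this
      · rw [← h1.2, ← Finset.card_erase_add_one heT]; push_cast; ring
    · simp [y, heT] at hT
  have hd : ∀ T, e ∉ T → dd y T = x T := by
    intro T hT
    unfold dd
    rw [Finset.sum_eq_single e]
    · simp only [y, if_pos (Finset.mem_insert_self e T), Finset.erase_insert hT]
      rw [← mul_assoc, sgn_sq, one_mul]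
    · intro f _ hfe
      have : e ∉ insert f T := by simp [hT, Ne.symm hfe]
      simp [y, this]
    · intro h; simp [hT] at h
  refine ⟨y, hy, fun T hT => ?_⟩
  by_cases heT : e ∈ T
  · have hT0 : F (T.erase e) := by
      rw [he _ (Finset.notMem_erase e T), Finset.insert_erase heT]; exact hT
    have hz : dd (fun S => x S - res F (dd y) S) (T.erase e) = 0 := by
      rw [dd_sub, hc _ hT0, dd_res_dd hF hy hT0, sub_self]
    rw [dd_single (Finset.notMem_erase e T)] at hz
    · simp only [Finset.insert_erase heT, res_pos hT] at hz
      rcases mul_eq_zero.1 hz with h | h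
      · exfalso
        have := sgn_sq (K := K) e (T.erase e)
        rw [h] at this; simp at this
      · exact (sub_eq_zero.1 h).symm
    · intro f hf hfe
      have : e ∉ insert f (T.erase e) := by simp [Ne.symm hfe]
      by_cases hFf : F (insert f (T.erase e))
      · rw [res_pos hFf, hd _ this, sub_self]
      · rw [res_neg hFf, hx.eq_zero hFf, sub_self]
  · exact hd T heT

lemma ex_empty (hF : ∀ T, ¬ F T) (p : ℤ) : Ex K F p := by
  intro x hx _
  exact ⟨fun _ => 0, fun T hT => absurd rfl hT, fun T hT => absurd hT (hF T)⟩

lemma ex_nocard {p : ℤ} (hF : ∀ T, F T → (T.card : ℤ) ≠ p) : Ex K F p := by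
  intro x hx _
  refine ⟨fun _ => 0, fun T hT => absurd rfl hT, fun T hT => ?_⟩
  have : x T = 0 := by
    by_contra h; exact hF T hT (hx T h).2
  rw [this]; exact dd_zero fun _ _ => rfl

lemma ex_congr {G : Finset E → Prop} (h : ∀ T, F T ↔ G T) (p : ℤ) : Ex K F p ↔ Ex K G p := by
  have : F = G := funext fun T => propext (h T)
  rw [this]

end Chain

end GLI
namespace GLI

section Fam
variable {K : Type} [Field K] {E : Type} [Fintype E] [LinearOrder E]
variable {V : Type} [DecidableEq V]

/-- edge sets inside W covering B -/
def Fam (s : E → Finset V) (W B : Finset V) (S : Finset E) : Prop :=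
  S.biUnion s ⊆ W ∧ B ⊆ S.biUnion s

lemma fam_convex (s : E → Finset V) (W B : Finset V) : Convex (Fam s W B) := by
  rintro T e f ⟨_, h2⟩ ⟨h3, _⟩
  refine ⟨(Finset.biUnion_subset_biUnion_of_subset_left s (Finset.subset_insert _ _)).trans h3,
    h2.trans (Finset.biUnion_subset_biUnion_of_subset_left s (Finset.subset_insert _ _))⟩

lemma fam_split (s : E → Finset V) {W B : Finset V} {v : V} (hv : v ∈ W) :
    Split (Fam s W B) (Fam s (W.erase v) B) (Fam s W (insert v B)) where
  conv := fam_convex s W B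
  iff T := by
    unfold Fam
    rw [Finset.subset_erase, Finset.insert_subset_iff]
    tauto
  disj T := by
    unfold Fam
    rw [Finset.subset_erase, Finset.insert_subset_iff]
    tauto
  up T e := by
    rintro ⟨_, h2⟩ ⟨h3, _⟩
    exact ⟨h3, h2.trans
      (Finset.biUnion_subset_biUnion_of_subset_left s (Finset.subset_insert _ _))⟩

lemma fam_acyclic (s : E → Finset V) {W B : Finset V} (e : E) (he : s e ⊆ W)
    (hB : Disjoint (s e) B) (p : ℤ) : Ex K (Fam s W B) p := by
  refine ex_cone (fam_convex s W B) e (fun T _ => ?_) p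
  unfold Fam
  rw [Finset.biUnion_insert, Finset.union_subset_iff]
  have : B ⊆ s e ∪ T.biUnion s ↔ B ⊆ T.biUnion s := by
    constructor
    · intro h b hb
      rcases Finset.mem_union.1 (h hb) with h1 | h1
      · exact absurd hb (Finset.disjoint_left.1 hB h1)
      · exact h1
    · intro h; exact h.trans Finset.subset_union_right
  rw [this]; tauto

lemma fam_shift (s : E → Finset V) {W B : Finset V} {b : V} (hb : b ∈ W)
    (e : E) (he : s e ⊆ W) (hB : Disjoint (s e) B) (p : ℤ) :
    Ex K (Fam s W (insert b B)) p ↔ Ex K (Fam s (W.erase b) B) (p - 1) := by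
  have hs := fam_split s (B := B) hb
  constructor
  · intro h
    refine hs.L3 ?_ (fam_acyclic s e he hB _)
    rwa [sub_add_cancel]
  · intro h
    exact hs.L2 (fam_acyclic s e he hB _) h

/-- s lists the edges of G -/
structure Lists (G : SimpleGraph V) (s : E → Finset V) : Prop where
  edge : ∀ e, ∃ a b, G.Adj a b ∧ s e = {a, b}
  surj : ∀ a b, G.Adj a b → ∃ e, s e = {a, b}
  inj : Function.Injective s

variable {G : SimpleGraph V} {s : E → Finset V}

lemma fam_star_aux (hs : Lists G s) (v : V) (N M : Finset V) (hv : v ∉ N)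
    (hM : ∀ m ∈ M, G.Adj v m) (hd : Disjoint N M) (p : ℤ) :
    Ex K (Fam s (insert v (N ∪ M)) (N ∪ M)) p ↔
      Ex K (Fam s (insert v N) N) (p - M.card) := by
  induction M using Finset.induction_on generalizing p with
  | empty => simp
  | insert b M hb ih =>
    have hvb : G.Adj v b := hM b (by simp)
    obtain ⟨e, he⟩ := hs.surj v b hvb
    have hbN : b ∉ N := fun h => Finset.disjoint_left.1 hd h (by simp)
    have hvM : v ∉ M := fun h => G.irrefl (hM v (by simp [h]))
    have hne : v ≠ b := hvb.ne
    have hbNM : b ∉ N ∪ M := by simp [hbN, hb]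
    have h1 : N ∪ insert b M = insert b (N ∪ M) := by
      rw [Finset.union_insert]
    rw [h1, fam_shift s (by simp) e (by rw [he]; intro x; simp; tauto)
      (by rw [he]; simp [hv, hvM, hbN, hb])]
    have h2 : (insert v (insert b (N ∪ M))).erase b = insert v (N ∪ M) := by
      rw [Finset.insert_comm, Finset.erase_insert]
      simp [hbN, hb, hne.symm]
    rw [h2, ih (fun m hm => hM m (by simp [hm])) (hd.mono_right (Finset.subset_insert _ _)),
      Finset.card_insert_of_notMem hb]
    push_cast
    rw [sub_sub, add_comm (1 : ℤ)]

lemma fam_star_base (hs : Lists G s) (v : V) (N : Finset V) (hN : ∀ w ∈ N, ¬ G.Adj v w)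
    (hv : v ∉ N) (T : Finset E) : Fam s (insert v N) N T ↔ Fam s N N T := by
  unfold Fam
  have : T.biUnion s ⊆ insert v N ↔ T.biUnion s ⊆ N := by
    constructor
    · intro h x hx
      rw [Finset.mem_biUnion] at hx
      obtain ⟨e, heT, hx⟩ := hx
      have hsub : s e ⊆ insert v N := (Finset.subset_biUnion_of_mem s heT).trans h
      obtain ⟨a, b, hab, he⟩ := hs.edge e
      rw [he] at hsub hx
      have ha : a ∈ insert v N := hsub (by simp)
      have hb : b ∈ insert v N := hsub (by simp)
      rw [Finset.mem_insert] at ha hb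
      have h1 : a ≠ v := by
        rintro rfl
        rcases hb with rfl | hb
        · exact G.irrefl hab
        · exact hN b hb hab
      have h2 : b ≠ v := by
        rintro rfl
        rcases ha with rfl | ha
        · exact G.irrefl hab
        · exact hN a ha hab.symm
      simp only [Finset.mem_insert, Finset.mem_singleton] at hx
      rcases hx with rfl | rfl
      · exact ha.resolve_left h1
      · exact hb.resolve_left h2
    · intro h; exact h.trans (Finset.subset_insert _ _)
  rw [this]

open Classical in
/-- complement neighbours -/
noncomputable def Nb (G : SimpleGraph V) (W : Finset V) (v : V) : Finset V :=
  (W.erase v).filter (fun w => ¬ G.Adj v w)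

open Classical in
/-- G neighbours -/
noncomputable def Mb (G : SimpleGraph V) (W : Finset V) (v : V) : Finset V :=
  (W.erase v).filter (fun w => G.Adj v w)

lemma nb_union (W : Finset V) (v : V) : Nb G W v ∪ Mb G W v = W.erase v := by
  ext x; simp only [Nb, Mb, Finset.mem_union, Finset.mem_filter]; tauto

lemma nb_disj (W : Finset V) (v : V) : Disjoint (Nb G W v) (Mb G W v) := by
  rw [Finset.disjoint_left]; simp only [Nb, Mb, Finset.mem_filter]; tauto

lemma nb_card (W : Finset V) (v : V) : (Nb G W v).card + (Mb G W v).card = (W.erase v).card := by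
  rw [← Finset.card_union_of_disjoint (nb_disj W v), nb_union]

lemma fam_star (hs : Lists G s) {W : Finset V} {v : V} (hv : v ∈ W) (p : ℤ) :
    Ex K (Fam s W (W.erase v)) p ↔
      Ex K (Fam s (Nb G W v) (Nb G W v)) (p - (Mb G W v).card) := by
  have h := fam_star_aux (K := K) hs v (Nb G W v) (Mb G W v) (by simp [Nb])
    (by simp [Mb]) (nb_disj W v) p
  rw [nb_union, Finset.insert_erase hv] at h
  rw [h]
  exact ex_congr (fam_star_base hs v _ (by simp [Nb]) (by simp [Nb])) _

/-- full-support family -/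
def Tf (s : E → Finset V) (W : Finset V) : Finset E → Prop := Fam s W W

lemma tf_split (s : E → Finset V) {W : Finset V} {v : V} (hv : v ∈ W) :
    Split (Fam s W (W.erase v)) (Tf s (W.erase v)) (Tf s W) := by
  have := fam_split s (B := W.erase v) hv
  rwa [Finset.insert_erase hv] at this

lemma fam_indep (hs : Lists G s) {N : Finset V} (hN : ∀ a ∈ N, ∀ b ∈ N, ¬ G.Adj a b)
    {T : Finset E} (hT : Tf s N T) : N = ∅ ∧ T = ∅ := by
  have hTe : T = ∅ := by
    rw [Finset.eq_empty_iff_forall_notMem]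
    intro e he
    obtain ⟨a, b, hab, hse⟩ := hs.edge e
    have hsub : s e ⊆ N := (Finset.subset_biUnion_of_mem s he).trans hT.1
    rw [hse] at hsub
    exact hN a (hsub (by simp)) b (hsub (by simp)) hab
  refine ⟨?_, hTe⟩
  have := hT.2
  rw [hTe] at this
  simpa using this

/-- exactness of independent sets -/
lemma ex_indep (hs : Lists G s) {N : Finset V} (hN : ∀ a ∈ N, ∀ b ∈ N, ¬ G.Adj a b)
    {p : ℤ} (h : N.Nonempty ∨ p ≠ 0) : Ex K (Tf s N) p := by
  apply ex_nocard
  intro T hT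
  obtain ⟨h1, h2⟩ := fam_indep hs hN hT
  rcases h with h | h
  · rw [h1] at h; simp at h
  · rw [h2]; simpa using h.symm

lemma step_simplicial (hs : Lists G s) {W : Finset V} {v : V} (hv : v ∈ W)
    (hN : ∀ a ∈ Nb G W v, ∀ b ∈ Nb G W v, ¬ G.Adj a b) {p : ℤ}
    (h : (Nb G W v).Nonempty ∨ p - (Mb G W v).card ≠ 0)
    (hE : Ex K (Tf s (W.erase v)) (p - 1)) : Ex K (Tf s W) p :=
  (tf_split s hv).L2 ((fam_star hs hv p).2 (ex_indep hs hN h)) hE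

/-- nonvanishing for a single edge -/
lemma not_ex_edge (hs : Lists G s) {a b : V} (hab : G.Adj a b) :
    ¬ Ex K (Tf s ({a, b} : Finset V)) 1 := by
  intro h
  obtain ⟨e, he⟩ := hs.surj a b hab
  have huniq : ∀ T, Tf s ({a, b} : Finset V) T → ∀ f ∈ T, f = e := by
    intro T hT f hf
    obtain ⟨c, d, hcd, hsf⟩ := hs.edge f
    have hsub : s f ⊆ {a, b} := (Finset.subset_biUnion_of_mem s hf).trans hT.1
    apply hs.inj
    rw [he]
    apply Finset.eq_of_subset_of_card_le hsub
    rw [hsf, Finset.card_pair hcd.ne, Finset.card_pair hab.ne]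
  have hTe : Tf s ({a, b} : Finset V) {e} := by
    constructor <;> simp [he]
  obtain ⟨y, hy, hy'⟩ := h (fun T => if T = {e} then 1 else 0)
    (by
      intro T hT
      by_cases h1 : T = {e}
      · subst h1; exact ⟨hTe, by simp⟩
      · simp [h1] at hT)
    (by
      intro T hT
      apply dd_zero
      intro f hf
      rw [if_neg]
      intro h1
      have hT0 : T = ∅ := by
        rw [Finset.eq_empty_iff_forall_notMem]
        intro g hg
        have h2 := huniq T hT g hg
        have h3 : f ∈ ({e} : Finset E) := h1 ▸ Finset.mem_insert_self f T
        rw [Finset.mem_singleton] at h3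
        exact hf (by rw [h3, ← h2]; exact hg)
      have := hT.2
      rw [hT0] at this
      simp at this)
  have h1 := hy' {e} hTe
  rw [dd_zero, if_pos rfl] at h1
  · exact zero_ne_one h1
  · intro f hf
    apply hy.eq_zero
    intro hT
    exact hf (by simpa using huniq _ hT f (by simp))

end Fam

end GLI
namespace GLI

section Cyc
variable {V : Type} [DecidableEq V]

/-- induced cycle given by a function on naturals -/
def NCyc (H : SimpleGraph V) (l : ℕ) (h : ℕ → V) : Prop :=
  (∀ i j, i < j → j < l → h i ≠ h j) ∧
  (∀ i j, i < j → j < l → (H.Adj (h i) (h j) ↔ (j = i + 1 ∨ (i = 0 ∧ j + 1 = l))))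

lemma NCyc.has {H : SimpleGraph V} {l : ℕ} {h : ℕ → V} (hl : 3 < l) (hc : NCyc H l h) :
    EP.HasInducedCycle H l := by
  have : NeZero l := ⟨by omega⟩
  have key : ∀ i j : ZMod l, j = i + 1 ↔ (j.val = i.val + 1 ∨ (j.val = 0 ∧ i.val + 1 = l)) := by
    intro i j
    have hi := ZMod.val_lt i
    have hj := ZMod.val_lt j
    have h1 : (1 : ZMod l).val = 1 := by
      have : Fact (1 < l) := ⟨by omega⟩
      exact ZMod.val_one l
    have h2 : (i + 1).val = (i.val + 1) % l := by rw [ZMod.val_add, h1]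
    rw [← (ZMod.val_injective l).eq_iff, h2]
    by_cases h3 : i.val + 1 = l
    · rw [h3, Nat.mod_self]; omega
    · rw [Nat.mod_eq_of_lt (by omega)]; omega
  refine ⟨fun i => h i.val, ?_, ?_⟩
  · intro i j hij
    simp only at hij
    apply ZMod.val_injective l
    rcases lt_trichotomy i.val j.val with h1 | h1 | h1
    · exact absurd hij (hc.1 _ _ h1 (ZMod.val_lt j))
    · exact h1
    · exact absurd hij.symm (hc.1 _ _ h1 (ZMod.val_lt i))
  · intro i j
    have hi := ZMod.val_lt i
    have hj := ZMod.val_lt j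
    rw [key i j, key j i]
    rcases lt_trichotomy i.val j.val with h1 | h1 | h1
    · rw [hc.2 _ _ h1 hj]; omega
    · simp only [h1, SimpleGraph.irrefl, false_iff]; omega
    · rw [SimpleGraph.adj_comm, hc.2 _ _ h1 hi]; omega

lemma NCyc.of {H : SimpleGraph V} {l : ℕ} (hl : 3 < l) (h : EP.HasInducedCycle H l) :
    ∃ h : ℕ → V, NCyc H l h := by
  obtain ⟨f, hf, ha⟩ := h
  have : NeZero l := ⟨by omega⟩
  have hcast : ∀ i j : ℕ, i < l → j ≤ l → (((j : ZMod l) = (i : ZMod l)) ↔ (j = i ∨ (i = 0 ∧ j = l))) := by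
    intro i j hi hj
    rw [ZMod.natCast_eq_natCast_iff', Nat.mod_eq_of_lt hi]
    by_cases h3 : j = l
    · rw [h3, Nat.mod_self]; omega
    · rw [Nat.mod_eq_of_lt (by omega)]; omega
  refine ⟨fun i => f (i : ZMod l), ?_, ?_⟩
  · intro i j hij hj heq
    have := (hcast i j (by omega) hj.le).1 (hf heq).symm
    omega
  · intro i j hij hj
    rw [ha]
    have h1 : ((j : ZMod l) = (i : ZMod l) + 1) ↔ j = i + 1 := by
      rw [← Nat.cast_succ, eq_comm, hcast j (i+1) hj (by omega)]; omega
    have h2 : ((i : ZMod l) = (j : ZMod l) + 1) ↔ (i = 0 ∧ j + 1 = l) := by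
      rw [← Nat.cast_succ, eq_comm, hcast i (j+1) (by omega) (by omega)]; omega
    simp only [h1, h2]

/-- chain from s to t of length k with interior in D -/
def Chn (H : SimpleGraph V) (D : Finset V) (s t : V) (k : ℕ) (g : ℕ → V) : Prop :=
  g 0 = s ∧ g k = t ∧ (∀ i, 0 < i → i < k → g i ∈ D) ∧ ∀ i, i < k → H.Adj (g i) (g (i+1))

lemma cyc_of_chn {H : SimpleGraph V} {D : Finset V} {s t v : V} (hv : ∀ x ∈ D, x ≠ v ∧ ¬ H.Adj v x)
    (hvs : H.Adj v s) (hvt : H.Adj v t) (hst : s ≠ t) (hnst : ¬ H.Adj s t)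
    (hex : ∃ k g, Chn H D s t k g) :
    ∃ l h, 3 < l ∧ NCyc H l h ∧ ∀ i, i < l → h i ∈ insert v (insert s (insert t D)) := by
  classical
  have hmin := fun m (hm : m < Nat.find hex) => Nat.find_min hex hm
  obtain ⟨g, h0, hk, hD, hadj⟩ := Nat.find_spec hex
  set k := Nat.find hex with hkdef
  clear_value k
  have hk2 : 2 ≤ k := by
    by_contra hlt
    have : k = 0 ∨ k = 1 := by omega
    rcases this with rfl | rfl
    · exact hst (h0.symm.trans hk)
    · have := hadj 0 (by omega)
      rw [h0] at this
      simp only [zero_add] at this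
      rw [hk] at this
      exact hnst this
  -- injectivity
  have hinj : ∀ i j, i < j → j ≤ k → g i ≠ g j := by
    intro i j hij hj heq
    apply hmin (k - (j - i)) (by omega)
    refine ⟨fun m => if m ≤ i then g m else g (m + (j - i)), ?_, ?_, ?_, ?_⟩
    · simp [h0]
    · by_cases h1 : k - (j - i) ≤ i
      · have : j = k := by omega
        have h2 : k - (j - i) = i := by omega
        simp only [if_pos h1]
        rw [h2, heq, this, hk]
      · simp only [if_neg h1]
        rw [show k - (j - i) + (j - i) = k by omega, hk]
    · intro m hm hm'
      simp only
      split_ifs with h1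
      · exact hD m hm (by omega)
      · exact hD _ (by omega) (by omega)
    · intro m hm
      simp only
      rcases lt_trichotomy m i with h1 | h1 | h1
      · rw [if_pos (by omega), if_pos (by omega)]; exact hadj m (by omega)
      · subst h1
        rw [if_pos (le_refl _), if_neg (by omega), heq]
        rw [show m + 1 + (j - m) = j + 1 by omega]
        exact hadj j (by omega)
      · rw [if_neg (by omega), if_neg (by omega), show m + 1 + (j - i) = m + (j - i) + 1 by omega]
        exact hadj _ (by omega)
  have hchord : ∀ i j, i + 1 < j → j ≤ k → ¬ H.Adj (g i) (g j) := by
    intro i j hij hj heq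
    apply hmin (k - (j - i - 1)) (by omega)
    refine ⟨fun m => if m ≤ i then g m else g (m + (j - i - 1)), ?_, ?_, ?_, ?_⟩
    · simp [h0]
    · simp only [if_neg (show ¬ (k - (j - i - 1) ≤ i) by omega)]
      rw [show k - (j - i - 1) + (j - i - 1) = k by omega, hk]
    · intro m hm hm'
      simp only
      split_ifs with h1
      · exact hD m hm (by omega)
      · exact hD _ (by omega) (by omega)
    · intro m hm
      simp only
      rcases lt_trichotomy m i with h1 | h1 | h1
      · rw [if_pos (by omega), if_pos (by omega)]; exact hadj m (by omega)
      · subst h1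
        rw [if_pos (le_refl _), if_neg (by omega)]
        rw [show m + 1 + (j - m - 1) = j by omega]
        exact heq
      · rw [if_neg (by omega), if_neg (by omega),
          show m + 1 + (j - i - 1) = m + (j - i - 1) + 1 by omega]
        exact hadj _ (by omega)
  have hgv : ∀ i, i ≤ k → g i ≠ v ∧ (H.Adj (g i) v ↔ i = 0 ∨ i = k) := by
    intro i hi
    by_cases hi0 : i = 0
    · subst hi0; rw [h0]; exact ⟨hvs.ne', by simp [hvs.symm]⟩
    by_cases hik : i = k
    · subst hik; rw [hk]; exact ⟨hvt.ne', by simp [hvt.symm]⟩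
    obtain ⟨h1, h2⟩ := hv _ (hD i (by omega) (by omega))
    refine ⟨h1, ?_⟩
    rw [SimpleGraph.adj_comm]
    simp [h2, hi0, hik]
  refine ⟨k + 2, fun i => if i ≤ k then g i else v, by omega, ⟨?_, ?_⟩, ?_⟩
  · intro i j hij hj
    simp only
    rw [if_pos (by omega)]
    split_ifs with h1
    · exact hinj i j hij h1
    · exact (hgv i (by omega)).1
  · intro i j hij hj
    simp only
    rw [if_pos (show i ≤ k by omega)]
    split_ifs with h1
    · by_cases h2 : j = i + 1
      · subst h2; simp [hadj i (by omega)]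
      · simp only [hchord i j (by omega) h1, false_iff]; omega
    · rw [(hgv i (by omega)).2]; omega
  · intro i hi
    simp only
    split_ifs with h1
    · by_cases hi0 : i = 0
      · subst hi0; simp [h0]
      by_cases hik : i = k
      · subst hik; simp [hk]
      have := hD i (by omega) (by omega)
      simp [this]
    · simp

/-- step relation inside D -/
def Stp (H : SimpleGraph V) (D : Finset V) (a b : V) : Prop := H.Adj a b ∧ a ∈ D ∧ b ∈ D

lemma chn_of_reach {H : SimpleGraph V} {D : Finset V} {s c c' : V} (hsc : H.Adj s c) (hc : c ∈ D)
    (hr : Relation.ReflTransGen (Stp H D) c c') :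
    c' ∈ D ∧ ∃ k g, Chn H D s c' (k+1) g := by
  induction hr with
  | refl =>
    refine ⟨hc, 0, fun i => if i = 0 then s else c, by simp, by simp, ?_, ?_⟩
    · intro i hi hi'; omega
    · intro i hi
      have : i = 0 := by omega
      subst this
      simpa using hsc
  | @tail b c' _ hbc ih =>
    obtain ⟨hb, k, g, h0, hk, hD, hadj⟩ := ih
    refine ⟨hbc.2.2, k+1, fun i => if i ≤ k + 1 then g i else c', by simp [h0], by simp, ?_, ?_⟩
    · intro i hi hi'
      simp only
      rw [if_pos (by omega)]
      by_cases h1 : i = k + 1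
      · rw [h1, hk]; exact hb
      · exact hD i hi (by omega)
    · intro i hi
      simp only
      rw [if_pos (by omega)]
      split_ifs with h1
      · exact hadj i (by omega)
      · have : i = k + 1 := by omega
        rw [this, hk]; exact hbc.1

lemma chn_full {H : SimpleGraph V} {D : Finset V} {s t c c' : V} (hsc : H.Adj s c) (hc : c ∈ D)
    (hr : Relation.ReflTransGen (Stp H D) c c') (hct : H.Adj c' t) :
    ∃ k g, Chn H D s t k g := by
  obtain ⟨hb, k, g, h0, hk, hD, hadj⟩ := chn_of_reach hsc hc hr
  refine ⟨k+2, fun i => if i ≤ k + 1 then g i else t, by simp [h0], by simp, ?_, ?_⟩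
  · intro i hi hi'
    simp only
    rw [if_pos (by omega)]
    by_cases h1 : i = k + 1
    · rw [h1, hk]; exact hb
    · exact hD i hi (by omega)
  · intro i hi
    simp only
    rw [if_pos (by omega)]
    split_ifs with h1
    · exact hadj i (by omega)
    · have : i = k + 1 := by omega
      rw [this, hk]; exact hct

/-- no induced cycle inside W -/
def Chd (H : SimpleGraph V) (W : Finset V) : Prop :=
  ∀ l h, 3 < l → NCyc H l h → (∀ i, i < l → h i ∈ W) → False

/-- simplicial vertex -/
def Smp (H : SimpleGraph V) (W : Finset V) (v : V) : Prop :=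
  ∀ a ∈ W, ∀ b ∈ W, H.Adj v a → H.Adj v b → a ≠ b → H.Adj a b

lemma dirac_aux (H : SimpleGraph V) (n : ℕ) : ∀ W : Finset V, W.card = n → Chd H W →
    ∀ v ∈ W, (∃ u ∈ W, u ≠ v ∧ ¬ H.Adj v u) → ∃ u ∈ W, u ≠ v ∧ ¬ H.Adj v u ∧ Smp H W u := by
  classical
  induction n using Nat.strong_induction_on with
  | _ n ih =>
  rintro W hW hch v hv ⟨u0, hu0, hu0v, hu0a⟩
  let D := W.filter (fun x => x ≠ v ∧ ¬ H.Adj v x)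
  let C := D.filter (fun x => Relation.ReflTransGen (Stp H D) u0 x)
  let S := W.filter (fun x => H.Adj v x ∧ ∃ c ∈ C, H.Adj x c)
  have hDW : ∀ x ∈ D, x ∈ W ∧ x ≠ v ∧ ¬ H.Adj v x := fun x hx => by simpa [D] using hx
  have hCD : ∀ x ∈ C, x ∈ D ∧ Relation.ReflTransGen (Stp H D) u0 x := fun x hx => by
    simpa only [C, Finset.mem_filter] using hx
  have hSW : ∀ x ∈ S, x ∈ W ∧ H.Adj v x ∧ ∃ c ∈ C, H.Adj x c := fun x hx => by
    simpa only [S, Finset.mem_filter] using hx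
  have hu0D : u0 ∈ D := by simp [D, hu0, hu0v, hu0a]
  have hu0C : u0 ∈ C := by
    simp only [C, Finset.mem_filter]; exact ⟨hu0D, Relation.ReflTransGen.refl⟩
  have hclique : ∀ a ∈ S, ∀ b ∈ S, a ≠ b → H.Adj a b := by
    intro a ha b hb hab
    by_contra hn
    obtain ⟨haW, hva, c, hc, hac⟩ := hSW a ha
    obtain ⟨hbW, hvb, c', hc', hbc⟩ := hSW b hb
    have hsymm : Std.Symm (Stp H D) := ⟨fun x y h => ⟨h.1.symm, h.2.2, h.2.1⟩⟩
    have hr : Relation.ReflTransGen (Stp H D) c c' :=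
      (Std.Symm.symm (r := Relation.ReflTransGen (Stp H D)) _ _ (hCD c hc).2).trans (hCD c' hc').2
    obtain ⟨l, h, hl, hcyc, hmem⟩ := cyc_of_chn (fun x hx => (hDW x hx).2) hva hvb hab hn
      (chn_full hac (hCD c hc).1 hr hbc.symm)
    refine hch l h hl hcyc (fun i hi => ?_)
    have := hmem i hi
    simp only [Finset.mem_insert] at this
    rcases this with h1 | h1 | h1 | h1
    · rwa [h1]
    · rwa [h1]
    · rwa [h1]
    · exact (hDW _ h1).1
  -- closing up
  have hnb : ∀ u ∈ C, ∀ a ∈ W, H.Adj u a → a ∈ C ∪ S := by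
    intro u hu a ha hua
    rw [Finset.mem_union]
    by_cases hva : H.Adj v a
    · right; simp only [S, Finset.mem_filter]; exact ⟨ha, hva, u, hu, hua.symm⟩
    · left
      have hav : a ≠ v := by
        rintro rfl
        exact (hDW u (hCD u hu).1).2.2 hua.symm
      have haD : a ∈ D := by simp [D, ha, hav, hva]
      simp only [C, Finset.mem_filter]
      exact ⟨haD, (hCD u hu).2.tail ⟨hua, (hCD u hu).1, haD⟩⟩
  have hsub : C ∪ S ⊆ W := by
    intro x hx
    rcases Finset.mem_union.1 hx with h1 | h1
    · exact (hDW x (hCD x h1).1).1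
    · exact (hSW x h1).1
  have hvn : v ∉ C ∪ S := by
    intro hx
    rcases Finset.mem_union.1 hx with h1 | h1
    · exact (hDW v (hCD v h1).1).2.1 rfl
    · exact H.irrefl (hSW v h1).2.1
  have hcard : (C ∪ S).card < n := by
    rw [← hW]
    exact Finset.card_lt_card ⟨hsub, fun h => hvn (h hv)⟩
  have hmono : ∀ X : Finset V, X ⊆ W → Chd H X := fun X hX l h hl hc hm =>
    hch l h hl hc (fun i hi => hX (hm i hi))
  suffices hfin : ∃ u ∈ C, Smp H (C ∪ S) u by
    obtain ⟨u, hu, hs⟩ := hfin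
    obtain ⟨h1, h2, h3⟩ := hDW u (hCD u hu).1
    refine ⟨u, h1, h2, h3, ?_⟩
    intro a ha b hb hua hub hab
    exact hs a (hnb u hu a ha hua) b (hnb u hu b hb hub) hua hub hab
  by_cases hcase : ∃ t ∈ S, ∃ x ∈ C ∪ S, x ≠ t ∧ ¬ H.Adj t x
  · obtain ⟨t, ht, hx⟩ := hcase
    obtain ⟨u, hu, hut, hna, hsm⟩ := ih _ hcard (C ∪ S) rfl (hmono _ hsub) t
      (Finset.mem_union_right _ ht) hx
    refine ⟨u, ?_, hsm⟩
    rcases Finset.mem_union.1 hu with h1 | h1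
    · exact h1
    · exact absurd (hclique t ht u h1 (Ne.symm hut)) hna
  · push Not at hcase
    have hC : ∃ u ∈ C, Smp H C u := by
      by_cases hcc : ∃ w ∈ C, ∃ x ∈ C, x ≠ w ∧ ¬ H.Adj w x
      · obtain ⟨w, hw, hx⟩ := hcc
        obtain ⟨u, hu, _, _, hsm⟩ := ih _ (lt_of_le_of_lt
          (Finset.card_le_card Finset.subset_union_left) hcard) C rfl
          (hmono _ (Finset.subset_union_left.trans hsub)) w hw hx
        exact ⟨u, hu, hsm⟩
      · push Not at hcc
        exact ⟨u0, hu0C, fun a ha b hb _ _ hab => hcc a ha b hb (Ne.symm hab)⟩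
    obtain ⟨u, hu, hsm⟩ := hC
    refine ⟨u, hu, ?_⟩
    intro a ha b hb hua hub hab
    rcases Finset.mem_union.1 ha with h1 | h1
    · rcases Finset.mem_union.1 hb with h2 | h2
      · exact hsm a h1 b h2 hua hub hab
      · exact (hcase b h2 a ha hab).symm
    · exact hcase a h1 b hb (Ne.symm hab)

lemma dirac (H : SimpleGraph V) {W : Finset V} (hne : W.Nonempty) (hch : Chd H W) :
    ∃ u ∈ W, Smp H W u := by
  by_cases hcc : ∃ w ∈ W, ∃ x ∈ W, x ≠ w ∧ ¬ H.Adj w x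
  · obtain ⟨w, hw, hx⟩ := hcc
    obtain ⟨u, hu, _, _, hsm⟩ := dirac_aux H _ W rfl hch w hw hx
    exact ⟨u, hu, hsm⟩
  · push Not at hcc
    obtain ⟨u, hu⟩ := hne
    exact ⟨u, hu, fun a ha b hb _ _ hab => hcc a ha b hb (Ne.symm hab)⟩

end Cyc

end GLI
namespace GLI

section Main
variable {K : Type} [Field K] {E : Type} [Fintype E] [LinearOrder E]
variable {V : Type} [DecidableEq V] {G : SimpleGraph V} {s : E → Finset V}

lemma mem_nb {W : Finset V} {v w : V} : w ∈ Nb G W v ↔ w ∈ W ∧ Gᶜ.Adj v w := by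
  simp only [Nb, Finset.mem_filter, Finset.mem_erase, SimpleGraph.compl_adj]
  constructor
  · rintro ⟨⟨h1, h2⟩, h3⟩; exact ⟨h2, h1.symm, h3⟩
  · rintro ⟨h2, h1, h3⟩; exact ⟨⟨h1.symm, h2⟩, h3⟩

lemma not_ex_nonneg {F : Finset E → Prop} {p : ℤ} (h : ¬ Ex K F p) : 0 ≤ p := by
  by_contra hp
  exact h (ex_nocard fun T _ => by omega)

theorem vanish (hs : Lists G s) (n : ℕ) : ∀ W : Finset V, W.card = n → ∀ p : ℤ,
    p + 2 ≤ W.card → ¬ Ex K (Tf s W) p →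
    ∃ l : ℕ, 3 < l ∧ (l : ℤ) ≤ p + 2 ∧ EP.HasInducedCycle Gᶜ l := by
  induction n using Nat.strong_induction_on with
  | _ n ih =>
  intro W hW p hp hne
  have hp0 := not_ex_nonneg hne
  have hWne : W.Nonempty := by
    rw [← Finset.card_pos]; omega
  have hrec : ∀ v ∈ W, ¬ Ex K (Tf s (W.erase v)) (p - 1) →
      ∃ l : ℕ, 3 < l ∧ (l : ℤ) ≤ p + 2 ∧ EP.HasInducedCycle Gᶜ l := by
    intro v hv hne'
    have hc := Finset.card_erase_add_one hv
    obtain ⟨l, h1, h2, h3⟩ := ih (W.erase v).card (by omega) _ rfl (p - 1) (by omega) hne'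
    exact ⟨l, h1, by omega, h3⟩
  by_cases hcase : p + 3 ≤ W.card
  · obtain ⟨v, hv⟩ := hWne
    by_cases h1 : Ex K (Tf s (W.erase v)) (p - 1)
    · have h2 : ¬ Ex K (Fam s W (W.erase v)) p := fun h => hne ((tf_split s hv).L2 h h1)
      rw [fam_star hs hv] at h2
      have hc := Finset.card_erase_add_one hv
      have hc2 := nb_card (G := G) W v
      obtain ⟨l, h3, h4, h5⟩ := ih (Nb G W v).card (by omega) _ rfl _ (by omega) h2
      exact ⟨l, h3, by omega, h5⟩
    · exact hrec v hv h1
  · by_cases hch : Chd Gᶜ W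
    · obtain ⟨v, hv, hsm⟩ := dirac _ hWne hch
      refine hrec v hv fun hE => hne (step_simplicial hs hv ?_ ?_ hE)
      · intro a ha b hb hab
        rw [mem_nb] at ha hb
        have := hsm a ha.1 b hb.1 ha.2 hb.2 hab.ne
        rw [SimpleGraph.compl_adj] at this
        exact this.2 hab
      · by_cases hN : (Nb G W v).Nonempty
        · exact Or.inl hN
        · right
          rw [Finset.not_nonempty_iff_eq_empty] at hN
          have hc := Finset.card_erase_add_one hv
          have hc2 := nb_card (G := G) W v
          rw [hN] at hc2
          simp only [Finset.card_empty] at hc2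
          omega
    · unfold Chd at hch
      push Not at hch
      obtain ⟨l, h, hl, hcyc, hmem⟩ := hch
      simp only [and_true] at hmem
      refine ⟨l, hl, ?_, hcyc.has hl⟩
      have : (Finset.range l).card ≤ W.card := by
        refine Finset.card_le_card_of_injOn h (fun i hi => hmem i (by simpa using hi)) ?_
        intro i hi j hj hij
        simp only [Finset.coe_range, Set.mem_Iio] at hi hj
        rcases lt_trichotomy i j with h1 | h1 | h1
        · exact absurd hij (hcyc.1 i j h1 hj)
        · exact h1
        · exact absurd hij.symm (hcyc.1 j i h1 hi)
      rw [Finset.card_range] at this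
      omega

/-- initial segment of a cycle -/
def Seg (h : ℕ → V) (k : ℕ) : Finset V := (Finset.range k).image h

lemma seg_erase {H : SimpleGraph V} {l : ℕ} {h : ℕ → V} (hc : NCyc H l h) {k : ℕ} (hk : k < l) :
    (Seg h (k+1)).erase (h k) = Seg h k := by
  ext x
  simp only [Seg, Finset.mem_erase, Finset.mem_image, Finset.mem_range]
  constructor
  · rintro ⟨h1, i, hi, rfl⟩
    refine ⟨i, ?_, rfl⟩
    have : i ≠ k := by rintro rfl; exact h1 rfl
    omega
  · rintro ⟨i, hi, rfl⟩
    exact ⟨hc.1 i k hi hk, i, by omega, rfl⟩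

lemma seg_path (hs : Lists G s) {l : ℕ} {h : ℕ → V} (hc : NCyc Gᶜ l h) (k : ℕ) (hk : k + 1 < l)
    (p : ℤ) : Ex K (Tf s (Seg h (k+1))) p := by
  induction k generalizing p with
  | zero =>
    refine ex_indep hs ?_ (Or.inl ⟨h 0, by simp [Seg]⟩)
    intro a ha b hb hab
    simp [Seg] at ha hb
    rw [ha, hb] at hab
    exact G.irrefl hab
  | succ k ih =>
    have hv : h (k+1) ∈ Seg h (k+1+1) := by
      simp only [Seg, Finset.mem_image, Finset.mem_range]; exact ⟨k+1, by omega, rfl⟩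
    have hN : ∀ w, w ∈ Nb G (Seg h (k+1+1)) (h (k+1)) ↔ w = h k := by
      intro w
      rw [mem_nb]
      simp only [Seg, Finset.mem_image, Finset.mem_range]
      constructor
      · rintro ⟨⟨i, hi, rfl⟩, h2⟩
        have hik : i < k + 1 := by
          have : i ≠ k + 1 := by rintro rfl; exact (Gᶜ).irrefl h2
          omega
        rw [SimpleGraph.adj_comm, hc.2 i (k+1) hik (by omega)] at h2
        have : i = k := by omega
        rw [this]
      · rintro rfl
        refine ⟨⟨k, by omega, rfl⟩, ?_⟩
        rw [SimpleGraph.adj_comm, hc.2 k (k+1) (by omega) (by omega)]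
        exact Or.inl rfl
    refine step_simplicial hs hv ?_ (Or.inl ⟨h k, (hN _).2 rfl⟩) ?_
    · intro a ha b hb hab
      rw [hN] at ha hb
      rw [ha, hb] at hab
      exact G.irrefl hab
    · rw [seg_erase hc (by omega)]
      exact ih (by omega) _

lemma seg_card {H : SimpleGraph V} {l : ℕ} {h : ℕ → V} (hc : NCyc H l h) :
    (Seg h l).card = l := by
  unfold Seg
  rw [Finset.card_image_of_injOn, Finset.card_range]
  intro i hi j hj hij
  simp only [Finset.coe_range, Set.mem_Iio] at hi hj
  rcases lt_trichotomy i j with h1 | h1 | h1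
  · exact absurd hij (hc.1 i j h1 hj)
  · exact h1
  · exact absurd hij.symm (hc.1 j i h1 hi)

theorem nonvanish (hs : Lists G s) {l : ℕ} (hl : 3 < l) {h : ℕ → V} (hc : NCyc Gᶜ l h) :
    ¬ Ex K (Tf s (Seg h l)) ((l : ℤ) - 2) := by
  intro hE
  obtain ⟨k, rfl⟩ : ∃ k, l = k + 3 := ⟨l - 3, by omega⟩
  have hcard := seg_card hc
  have hv : h (k+2) ∈ Seg h (k+3) := by
    simp only [Seg, Finset.mem_image, Finset.mem_range]; exact ⟨k+2, by omega, rfl⟩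
  have hN : Nb G (Seg h (k+3)) (h (k+2)) = {h 0, h (k+1)} := by
    ext w
    rw [mem_nb]
    simp only [Seg, Finset.mem_image, Finset.mem_range, Finset.mem_insert, Finset.mem_singleton]
    constructor
    · rintro ⟨⟨i, hi, rfl⟩, h2⟩
      have hik : i < k + 2 := by
        have : i ≠ k + 2 := by rintro rfl; exact (Gᶜ).irrefl h2
        omega
      rw [SimpleGraph.adj_comm, hc.2 i (k+2) hik (by omega)] at h2
      have : i = 0 ∨ i = k + 1 := by omega
      rcases this with rfl | rfl
      · exact Or.inl rfl
      · exact Or.inr rfl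
    · rintro (rfl | rfl)
      · refine ⟨⟨0, by omega, rfl⟩, ?_⟩
        rw [SimpleGraph.adj_comm, hc.2 0 (k+2) (by omega) (by omega)]
        omega
      · refine ⟨⟨k+1, by omega, rfl⟩, ?_⟩
        rw [SimpleGraph.adj_comm, hc.2 (k+1) (k+2) (by omega) (by omega)]
        omega
  have hne : h 0 ≠ h (k+1) := hc.1 0 (k+1) (by omega) (by omega)
  have hadj : G.Adj (h 0) (h (k+1)) := by
    by_contra hn
    have : Gᶜ.Adj (h 0) (h (k+1)) := by
      rw [SimpleGraph.compl_adj]; exact ⟨hne, hn⟩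
    rw [hc.2 0 (k+1) (by omega) (by omega)] at this
    omega
  have hF : Ex K (Fam s (Seg h (k+3)) ((Seg h (k+3)).erase (h (k+2)))) (((k + 3 : ℕ) : ℤ) - 2) := by
    refine (tf_split s hv).L1 ?_ hE
    rw [seg_erase hc (by omega)]
    exact seg_path hs hc (k+1) (by omega) _
  rw [fam_star hs hv] at hF
  have hcN := nb_card (G := G) (Seg h (k+3)) (h (k+2))
  have hce := Finset.card_erase_add_one hv
  rw [hN, Finset.card_pair hne] at hcN
  have hval : ((k + 3 : ℕ) : ℤ) - 2 - ((Mb G (Seg h (k+3)) (h (k+2))).card : ℤ) = 1 := by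
    push_cast; omega
  rw [hval, hN] at hF
  exact not_ex_edge hs hadj hF

/-- degree family -/
def Dg (s : E → Finset V) (j : ℕ) (S : Finset E) : Prop := (S.biUnion s).card = j

lemma tf_iff {W : Finset V} {S : Finset E} : Tf s W S ↔ S.biUnion s = W := by
  unfold Tf Fam
  exact ⟨fun h => h.1.antisymm h.2, fun h => by rw [h]; simp⟩

lemma bi_sub (s : E → Finset V) (e : E) (T : Finset E) : T.biUnion s ⊆ (insert e T).biUnion s :=
  Finset.biUnion_subset_biUnion_of_subset_left s (Finset.subset_insert _ _)

lemma dg_of_tf {j : ℕ} {p : ℤ} (h : ∀ W : Finset V, W.card = j → Ex K (Tf s W) p) :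
    Ex K (Dg s j) p := by
  intro x hx hcy
  have hch : ∀ W : Finset V, ∃ y : Finset E → K,
      (∀ T, y T ≠ 0 → W.card = j ∧ T.biUnion s = W ∧ (T.card : ℤ) = p + 1) ∧
      (W.card = j → ∀ T, T.biUnion s = W → dd y T = x T) := by
    intro W
    by_cases hW : W.card = j
    · obtain ⟨y, hy, hy'⟩ := h W hW (res (Tf s W) x) (sup_res hx) (by
        intro T hT
        have hT' := tf_iff.1 hT
        rw [← hcy T (by unfold Dg; rw [hT', hW])]
        apply dd_congr
        intro e _
        by_cases hc : Tf s W (insert e T)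
        · rw [res_pos hc]
        · rw [res_neg hc]
          symm
          apply hx.eq_zero
          intro hD
          apply hc
          rw [tf_iff]
          symm
          rw [← hT']
          apply Finset.eq_of_subset_of_card_le (bi_sub s e T)
          unfold Dg at hD
          rw [hD, hT', hW])
      refine ⟨y, fun T hT => ⟨hW, tf_iff.1 (hy T hT).1, (hy T hT).2⟩, fun _ T hT => ?_⟩
      rw [hy' T (tf_iff.2 hT), res_pos (tf_iff.2 hT)]
    · exact ⟨fun _ => 0, fun T hT => absurd rfl hT, fun h => absurd h hW⟩
  choose Y hY hY' using hch
  refine ⟨fun T => Y (T.biUnion s) T, ?_, ?_⟩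
  · intro T hT
    have := hY _ T hT
    exact ⟨this.1, this.2.2⟩
  · intro T hT
    rw [← hY' (T.biUnion s) hT T rfl]
    apply dd_congr
    intro e _
    by_cases hc : (insert e T).biUnion s = T.biUnion s
    · rw [hc]
    · have h1 : Y (T.biUnion s) (insert e T) = 0 := by
        by_contra h'; exact hc (hY _ _ h').2.1
      rw [h1]
      by_contra h'
      have := (hY _ _ h').1
      apply hc
      symm
      apply Finset.eq_of_subset_of_card_le (bi_sub s e T)
      rw [this]; exact hT.symm.le

lemma tf_of_dg {j : ℕ} {p : ℤ} (h : Ex K (Dg s j) p) (W : Finset V) (hW : W.card = j) :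
    Ex K (Tf s W) p := by
  intro x hx hcy
  have hsub : ∀ T, Tf s W T → Dg s j T := fun T hT => by
    unfold Dg; rw [tf_iff.1 hT, hW]
  obtain ⟨y, hy, hy'⟩ := h x (hx.mono hsub) (by
    intro T hT
    by_cases hc : Tf s W T
    · exact hcy T hc
    · apply dd_zero
      intro e _
      apply hx.eq_zero
      intro h1
      apply hc
      rw [tf_iff] at h1 ⊢
      rw [← h1]
      apply Finset.eq_of_subset_of_card_le (bi_sub s e T)
      unfold Dg at hT
      rw [h1, hT, hW])
  refine ⟨res (Tf s W) y, sup_res hy, fun T hT => ?_⟩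
  rw [← hy' T (hsub T hT)]
  apply dd_congr
  intro e _
  by_cases hc : Tf s W (insert e T)
  · rw [res_pos hc]
  · rw [res_neg hc]
    symm
    apply hy.eq_zero
    intro hD
    apply hc
    rw [tf_iff] at hT ⊢
    symm
    rw [← hT]
    apply Finset.eq_of_subset_of_card_le (bi_sub s e T)
    unfold Dg at hD
    rw [hD, hT, hW]

end Main

end GLI
namespace GLI

section Bet
variable (K : Type) [Field K] {n : ℕ} (G : SimpleGraph (Fin n))

/-- edges as vertex sets -/
noncomputable def es (k : Fin (EP.edgeFins G).card) : Finset (Fin n) :=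
  ((EP.edgeFins G).equivFin.symm k : Sym2 (Fin n)).toFinset

lemma mem_edgeFins {e : Sym2 (Fin n)} : e ∈ EP.edgeFins G ↔ e ∈ G.edgeSet := by
  simp [EP.edgeFins]

lemma es_lists : Lists G (es G) where
  edge e := by
    have h := ((EP.edgeFins G).equivFin.symm e).2
    rw [mem_edgeFins] at h
    unfold es
    revert h
    generalize (((EP.edgeFins G).equivFin.symm e : { x // x ∈ EP.edgeFins G }) : Sym2 (Fin n)) = z
    induction z with
    | _ a b =>
      intro h
      exact ⟨a, b, h, by ext x; simp⟩
  surj a b hab := by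
    refine ⟨(EP.edgeFins G).equivFin ⟨s(a, b), (mem_edgeFins G).2 hab⟩, ?_⟩
    unfold es
    rw [Equiv.symm_apply_apply]
    ext x; simp
  inj := by
    intro e f hef
    unfold es at hef
    apply (EP.edgeFins G).equivFin.symm.injective
    apply Subtype.ext
    apply Sym2.ext
    intro x
    rw [← Sym2.mem_toFinset, ← Sym2.mem_toFinset, hef]

lemma mlcm_eq (S : Finset (Fin (EP.edgeFins G).card)) (x : Fin n) :
    EP.mlcm (EP.edgeGens G) S x = if x ∈ S.biUnion (es G) then 1 else 0 := by
  unfold EP.mlcm EP.edgeGens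
  split_ifs with h
  · apply le_antisymm
    · apply Finset.sup_le
      intro k _
      split_ifs <;> simp
    · rw [Finset.mem_biUnion] at h
      obtain ⟨k, hk, hx⟩ := h
      have hx' : x ∈ ((EP.edgeFins G).equivFin.symm k : Sym2 (Fin n)) := by
        simpa [es] using hx
      refine le_trans ?_ (Finset.le_sup (f := fun k => if x ∈
        ((EP.edgeFins G).equivFin.symm k : Sym2 (Fin n)) then 1 else 0) hk)
      simp [hx']
  · rw [← Nat.le_zero]
    apply Finset.sup_le
    intro k hk
    rw [if_neg]
    intro hx
    apply h
    rw [Finset.mem_biUnion]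
    exact ⟨k, hk, by simpa [es] using hx⟩

lemma mlcm_inj (S T : Finset (Fin (EP.edgeFins G).card)) :
    EP.mlcm (EP.edgeGens G) S = EP.mlcm (EP.edgeGens G) T ↔
      S.biUnion (es G) = T.biUnion (es G) := by
  constructor
  · intro h
    ext x
    have := congrFun h x
    rw [mlcm_eq, mlcm_eq] at this
    by_cases h1 : x ∈ S.biUnion (es G) <;> by_cases h2 : x ∈ T.biUnion (es G) <;>
      simp only [h1, h2, if_true, if_false] at this ⊢ <;> omega
  · intro h
    funext x
    rw [mlcm_eq, mlcm_eq, h]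

lemma mlcm_sum (S : Finset (Fin (EP.edgeFins G).card)) :
    ∑ x, EP.mlcm (EP.edgeGens G) S x = (S.biUnion (es G)).card := by
  simp_rw [mlcm_eq]
  rw [Finset.sum_ite_mem]
  simp

open Classical in
lemma bdT_apply {r : ℕ} (g : Fin r → (Fin n → ℕ)) (x : Finset (Fin r) →₀ K)
    (T : Finset (Fin r)) :
    EP.bdT K g x T = dd (fun S => if EP.mlcm g T = EP.mlcm g S then x S else 0) T := by
  induction x using Finsupp.induction_linear with
  | zero => rw [map_zero, dd_zero]; · rfl
            · intro e _; simp
  | add a b ha hb =>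
    rw [map_add, Finsupp.add_apply, ha, hb, ← dd_add]
    apply dd_congr
    intro e _
    split_ifs <;> simp
  | single S c =>
    unfold EP.bdT
    rw [Finsupp.lsum_single, LinearMap.toSpanSingleton_apply, Finsupp.smul_apply,
      Finsupp.finsetSum_apply, Finset.smul_sum]
    by_cases hex : ∃ e, e ∉ T ∧ insert e T = S
    · obtain ⟨e, he, rfl⟩ := hex
      rw [dd_single he]
      · rw [Finset.sum_eq_single e]
        · rw [Finset.erase_insert he]
          simp only [Finsupp.single_eq_same]
          split_ifs with h
          · rw [Finset.filter_insert, if_neg (lt_irrefl e)]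
            simp [sgn, mul_comm]
          · simp
        · intro k hk hke
          have : (insert e T).erase k ≠ T := by
            intro h
            apply he
            rw [← h]
            simp [Ne.symm hke]
          split_ifs <;> simp [Finsupp.single_apply, this]
        · intro h; simp at h
      · intro f hf hfe
        have : insert f T ≠ insert e T := by
          intro h
          have h1 : f ∈ insert e T := h ▸ Finset.mem_insert_self f T
          rw [Finset.mem_insert] at h1
          tauto
        simp [Finsupp.single_apply, Ne.symm this]
    · push Not at hex
      rw [dd_zero]
      · apply Finset.sum_eq_zero
        intro k hk
        have : S.erase k ≠ T := by
          rintro rfl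
          exact hex k (Finset.notMem_erase k S) (Finset.insert_erase hk)
        split_ifs <;> simp [Finsupp.single_apply, this]
      · intro e he
        simp [Finsupp.single_apply, Ne.symm (hex e he)]

lemma mem_strand {p j : ℕ} (x : Finset (Fin (EP.edgeFins G).card) →₀ K) :
    x ∈ EP.strand K (EP.edgeGens G) p j ↔ Sup (Dg (es G) j) (p : ℤ) (fun S => x S) := by
  have : EP.strand K (EP.edgeGens G) p j =
      Finsupp.supported K K {S | S.card = p ∧ ∑ x, EP.mlcm (EP.edgeGens G) S x = j} := by
    rw [Finsupp.supported_eq_span_single]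
    unfold EP.strand
    congr 1
    ext c
    simp only [Set.mem_setOf_eq, Set.mem_image]
    constructor
    · rintro ⟨S, h1, h2, rfl⟩; exact ⟨S, ⟨h1, h2⟩, rfl⟩
    · rintro ⟨S, ⟨h1, h2⟩, rfl⟩; exact ⟨S, h1, h2, rfl⟩
  rw [this, Finsupp.mem_supported]
  constructor
  · intro h T hT
    have := h (Finset.mem_coe.2 (Finsupp.mem_support_iff.2 hT))
    simp only [Set.mem_setOf_eq, mlcm_sum] at this
    exact ⟨this.2, by exact_mod_cast this.1⟩
  · intro h T hT
    have := h T (Finsupp.mem_support_iff.1 (Finset.mem_coe.1 hT))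
    simp only [Set.mem_setOf_eq, mlcm_sum]
    exact ⟨by exact_mod_cast this.2, this.1⟩

lemma bdT_strand {p : ℤ} {j : ℕ} (x : Finset (Fin (EP.edgeFins G).card) →₀ K)
    (hx : Sup (Dg (es G) j) p (fun S => x S)) (T : Finset (Fin (EP.edgeFins G).card)) :
    EP.bdT K (EP.edgeGens G) x T = res (Dg (es G) j) (dd (fun S => x S)) T := by
  classical
  rw [bdT_apply]
  by_cases hT : Dg (es G) j T
  · rw [res_pos hT]
    apply dd_congr
    intro e _
    split_ifs with h
    · rfl
    · symm
      apply hx.eq_zero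
      intro hD
      apply h
      rw [mlcm_inj]
      apply Finset.eq_of_subset_of_card_le (bi_sub _ e T)
      unfold Dg at hD hT
      rw [hD, hT]
  · rw [res_neg hT]
    apply dd_zero
    intro e _
    split_ifs with h
    · apply hx.eq_zero
      intro hD
      apply hT
      rw [mlcm_inj] at h
      unfold Dg at hD ⊢
      rw [h, hD]
    · rfl

lemma torRank_ne {p j : ℕ} :
    EP.torRank K (EP.edgeGens G) p j ≠ 0 ↔ ¬ Ex K (Dg (es G) j) (p : ℤ) := by
  unfold EP.torRank
  set Z := EP.strand K (EP.edgeGens G) p j ⊓ LinearMap.ker (EP.bdT K (EP.edgeGens G)) with hZ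
  set B := Submodule.map (EP.bdT K (EP.edgeGens G)) (EP.strand K (EP.edgeGens G) (p+1) j) with hB
  have h1 : Module.finrank K ↥Z - Module.finrank K ↥(B ⊓ Z) = 0 ↔ Z ≤ B := by
    constructor
    · intro h
      have h2 : B ⊓ Z = Z := Submodule.eq_of_le_of_finrank_le inf_le_right (by omega)
      rw [← h2]; exact inf_le_left
    · intro h
      rw [inf_eq_right.2 h, Nat.sub_self]
  rw [Ne, h1, not_iff_not]
  constructor
  · intro h x hx hcy
    let x' : Finset (Fin (EP.edgeFins G).card) →₀ K := Finsupp.equivFunOnFinite.symm x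
    have hx'' : (fun S => x' S) = x := rfl
    have hmem : x' ∈ Z := by
      rw [hZ, Submodule.mem_inf]
      refine ⟨(mem_strand K G x').2 hx, ?_⟩
      rw [LinearMap.mem_ker]
      ext T
      rw [bdT_strand K G x' hx T, hx'']
      by_cases hT : Dg (es G) j T
      · rw [res_pos hT, hcy T hT]; rfl
      · rw [res_neg hT]; rfl
    obtain ⟨y, hy, hyx⟩ := h hmem
    have hy' := (mem_strand K G y).1 hy
    push_cast at hy'
    refine ⟨fun S => y S, hy', fun T hT => ?_⟩
    have := bdT_strand K G y hy' T
    rw [hyx, res_pos hT] at this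
    rw [← this]; rfl
  · intro h x hx
    rw [hZ, Submodule.mem_inf, LinearMap.mem_ker] at hx
    have hx' := (mem_strand K G x).1 hx.1
    obtain ⟨y, hy, hyx⟩ := h (fun S => x S) hx' (fun T hT => by
      have := bdT_strand K G x hx' T
      rw [hx.2, res_pos hT] at this
      rw [← this]; rfl)
    let y' : Finset (Fin (EP.edgeFins G).card) →₀ K := Finsupp.equivFunOnFinite.symm y
    have hy' : Sup (Dg (es G) j) ((p : ℤ) + 1) (fun S => y' S) := hy
    refine ⟨y', (mem_strand K G y').2 (by push_cast; exact hy'), ?_⟩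
    ext T
    rw [bdT_strand K G y' hy' T]
    by_cases hT : Dg (es G) j T
    · rw [res_pos hT]; exact hyx T hT
    · rw [res_neg hT]; exact (hx'.eq_zero hT).symm

lemma betti_of_cycle {l : ℕ} (hl : 3 < l) (h : EP.HasInducedCycle Gᶜ l) :
    EP.gBetti K G (l - 3) l ≠ 0 := by
  obtain ⟨g, hg⟩ := NCyc.of hl h
  unfold EP.gBetti EP.betti
  rw [torRank_ne]
  intro hE
  have h2 := tf_of_dg hE (Seg g l) (seg_card hg)
  apply nonvanish (K := K) (es_lists G) hl hg
  have : ((l - 3 + 1 : ℕ) : ℤ) = (l : ℤ) - 2 := by omega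
  rwa [this] at h2

lemma cycle_of_betti {i j : ℕ} (hij : i + 2 < j) (h : EP.gBetti K G i j ≠ 0) :
    ∃ l, 3 < l ∧ l ≤ i + 3 ∧ EP.HasInducedCycle Gᶜ l := by
  unfold EP.gBetti EP.betti at h
  rw [torRank_ne] at h
  have : ∃ W : Finset (Fin n), W.card = j ∧ ¬ Ex K (Tf (es G) W) ((i + 1 : ℕ) : ℤ) := by
    by_contra hc
    push Not at hc
    exact h (dg_of_tf hc)
  obtain ⟨W, hW, hne⟩ := this
  obtain ⟨l, h1, h2, h3⟩ := vanish (es_lists G) _ W rfl _ (by push_cast; omega) hne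
  exact ⟨l, h1, by push_cast at h2; omega, h3⟩

end Bet

end GLI

/-- **EGHP.** The Green–Lazarsfeld index of the edge ideal `I(G)` equals the
length of the shortest induced cycle of length greater than `3` in the complement of `G`,
minus `3` (and is infinite if no such cycle exists). -/
theorem statement0 (K : Type) [Field K] (n : ℕ) (G : SimpleGraph (Fin n)) :
    EP.gIndex K G =
      sInf ((fun l : ℕ => (l : ℕ∞)) '' {l | 3 < l ∧ EP.HasInducedCycle Gᶜ l}) - 3 := by
  unfold EP.gIndex
  apply le_antisymm
  · rcases Set.eq_empty_or_nonempty {l | 3 < l ∧ EP.HasInducedCycle Gᶜ l} with h | h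
    · rw [h, Set.image_empty, sInf_empty]
      exact le_of_le_of_eq le_top rfl
    · obtain ⟨l, ⟨hl, hc⟩, hle⟩ := csInf_mem (h.image (fun l : ℕ => (l : ℕ∞)))
      rw [← hle]
      apply sInf_le
      refine ⟨l - 3, l, ?_, by omega, GLI.betti_of_cycle K G hl hc⟩
      push_cast
      rfl
  · apply le_sInf
    rintro N ⟨i, j, rfl, hij, hb⟩
    obtain ⟨l, h1, h2, h3⟩ := GLI.cycle_of_betti K G hij hb
    rw [tsub_le_iff_right]
    refine le_trans (sInf_le ⟨l, ⟨h1, h3⟩, rfl⟩) ?_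
    simp only
    exact_mod_cast h2
end

section
/- If G is a simple graph whose edge ideal I(G) has a linear resolution over a field K, then the complement graph of G is chordal; conversely, if the complement of G is chordal then I(G) has a linear resolution over every field (Fröberg's theorem). -/
open Finsupp

set_option linter.unusedSectionVars false
set_option linter.unusedVariables false

namespace FB

section Alg

variable {K : Type} [Field K] {ι : Type} [Fintype ι] [DecidableEq ι] [LinearOrder ι]

/-- sign -/
def sg (K : Type) [Field K] {ι : Type} [LinearOrder ι] (T : Finset ι) (k : ι) : K :=
  (-1 : K) ^ ((T.filter (fun j => j < k)).card)

/-- full boundary in coefficient form -/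
def d0 (z : Finset ι → K) (T : Finset ι) : K :=
  ∑ k, if k ∈ T then 0 else sg K T k * z (insert k T)

lemma sg_sq (T : Finset ι) (k : ι) : sg K T k * sg K T k = 1 := by
  unfold sg
  rw [← mul_pow]; simp

lemma sg_swap_aux (T : Finset ι) (k m : ι) (hk : k ∉ T) (hm : m ∉ T) (h : k < m) :
    sg K T k * sg K (insert k T) m + sg K T m * sg K (insert m T) k = 0 := by
  unfold sg
  have h1 : (insert k T).filter (fun j => j < m) = insert k (T.filter (fun j => j < m)) := by
    rw [Finset.filter_insert, if_pos h]
  have h2 : (insert m T).filter (fun j => j < k) = (T.filter (fun j => j < k)) := by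
    rw [Finset.filter_insert, if_neg (not_lt.2 h.le)]
  rw [h1, h2, Finset.card_insert_of_notMem (by simp [hk]), pow_succ]
  ring

lemma sg_swap (T : Finset ι) (k m : ι) (hk : k ∉ T) (hm : m ∉ T) (h : k ≠ m) :
    sg K T k * sg K (insert k T) m + sg K T m * sg K (insert m T) k = 0 := by
  rcases lt_or_gt_of_ne h with h | h
  · exact sg_swap_aux T k m hk hm h
  · rw [add_comm]; exact sg_swap_aux T m k hm hk h

lemma d0_add (z w : Finset ι → K) (T) : d0 (z + w) T = d0 z T + d0 w T := by
  unfold d0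
  rw [← Finset.sum_add_distrib]
  refine Finset.sum_congr rfl fun k _ => ?_
  split_ifs <;> simp [mul_add]

lemma d0_sub (z w : Finset ι → K) (T) : d0 (z - w) T = d0 z T - d0 w T := by
  unfold d0
  rw [← Finset.sum_sub_distrib]
  refine Finset.sum_congr rfl fun k _ => ?_
  split_ifs <;> simp [mul_sub]

lemma d0_smul (c : K) (z : Finset ι → K) (T) : d0 (c • z) T = c * d0 z T := by
  unfold d0
  rw [Finset.mul_sum]
  refine Finset.sum_congr rfl fun k _ => ?_
  split_ifs
  · simp
  · simp; ring

lemma d0_d0 (z : Finset ι → K) (T) : d0 (d0 z) T = 0 := by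
  set F : ι → ι → K := fun k m => if k ∈ T then 0 else if m ∈ insert k T then 0 else
    sg K T k * sg K (insert k T) m * z (insert m (insert k T)) with hF
  have e : d0 (d0 z) T = ∑ k, ∑ m, F k m := by
    unfold d0
    refine Finset.sum_congr rfl fun k _ => ?_
    simp only [hF]
    split_ifs with hk
    · simp
    · rw [Finset.mul_sum]
      refine Finset.sum_congr rfl fun m _ => ?_
      split_ifs
      · simp
      · ring
  rw [e, ← Finset.sum_product']
  refine Finset.sum_involution (fun p _ => (p.2, p.1)) ?_ ?_ ?_ ?_
  · rintro ⟨k, m⟩ _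
    simp only [hF]
    by_cases hk : k ∈ T
    · simp [hk]
    by_cases hm : m ∈ T
    · simp [hm]
    by_cases hkm : k = m
    · subst hkm; simp
    · have hmk : m ≠ k := fun h => hkm h.symm
      simp only [hk, hm, Finset.mem_insert, hkm, hmk, or_self, if_false]
      rw [Finset.insert_comm k m, ← add_mul, sg_swap T k m hk hm hkm, zero_mul]
  · rintro ⟨k, m⟩ _ h heq
    simp only [Prod.mk.injEq] at heq
    apply h
    simp only [hF]
    rw [heq.1]; simp
  · intros; simp
  · intros; rfl

/-- supported in `F` in card `p` -/
def Sup (F : Set (Finset ι)) (p : ℕ) (z : Finset ι → K) : Prop :=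
  ∀ S, z S ≠ 0 → S ∈ F ∧ S.card = p

/-- exactness -/
def Ex (K : Type) [Field K] {ι : Type} [Fintype ι] [DecidableEq ι] [LinearOrder ι]
    (F : Set (Finset ι)) (p : ℕ) : Prop :=
  ∀ z : Finset ι → K, Sup F p z → (∀ T ∈ F, d0 z T = 0) →
    ∃ w : Finset ι → K, Sup F (p+1) w ∧ ∀ T ∈ F, d0 w T = z T

/-- convexity -/
def Cvx (F : Set (Finset ι)) : Prop := ∀ S T U, S ∈ F → U ∈ F → S ⊆ T → T ⊆ U → T ∈ F

lemma d0_ne {z : Finset ι → K} {T} (h : d0 z T ≠ 0) : ∃ k, k ∉ T ∧ z (insert k T) ≠ 0 := by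
  by_contra hc
  push Not at hc
  apply h
  unfold d0
  refine Finset.sum_eq_zero fun k _ => ?_
  split_ifs with hk
  · rfl
  · rw [hc k hk, mul_zero]

open Classical in
/-- restricted boundary -/
noncomputable def dF (F : Set (Finset ι)) (z : Finset ι → K) : Finset ι → K :=
  fun T => if T ∈ F then d0 z T else 0

lemma d0_dF {F : Set (Finset ι)} (hF : Cvx F) {p} {z : Finset ι → K} (hz : Sup F p z) {T}
    (hT : T ∈ F) : d0 (dF F z) T = 0 := by
  have h0 : d0 (d0 z - dF F z) T = 0 := by
    by_contra h
    obtain ⟨k, hk, h⟩ := d0_ne h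
    simp only [Pi.sub_apply, dF] at h
    split_ifs at h with h1
    · simp at h
    · rw [sub_zero] at h
      obtain ⟨m, hm, h⟩ := d0_ne h
      exact h1 (hF T _ _ hT (hz _ h).1 (Finset.subset_insert _ _) (Finset.subset_insert _ _))
  rw [d0_sub, d0_d0] at h0
  simpa using h0

lemma Sup_dF {F : Set (Finset ι)} {p} {z : Finset ι → K} (hz : Sup F (p+1) z) :
    Sup F p (dF F z) := by
  intro S hS
  unfold dF at hS
  split_ifs at hS with h
  · refine ⟨h, ?_⟩
    obtain ⟨m, hm, h⟩ := d0_ne hS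
    have := (hz _ h).2
    rw [Finset.card_insert_of_notMem hm] at this
    omega
  · simp at hS

lemma Ex_split {F L U : Set (Finset ι)} (hF : Cvx F) (hFLU : ∀ S, S ∈ F ↔ S ∈ L ∨ S ∈ U)
    (hLU : ∀ S ∈ L, ∀ T ∈ U, ¬ T ⊆ S) {p : ℕ} (hL : Ex K L p) (hU : Ex K U p) : Ex K F p := by
  classical
  intro z hz hdz
  have hzLU : ∀ (y : Finset ι → K) q, Sup L q y → ∀ T ∈ U, d0 y T = 0 := by
    intro y q hy T hT
    by_contra h
    obtain ⟨k, hk, h⟩ := d0_ne h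
    exact hLU _ (hy _ h).1 T hT (Finset.subset_insert _ _)
  set zU : Finset ι → K := fun S => if S ∈ U then z S else 0 with hzU
  have hzL : Sup L p (z - zU) := by
    intro S hS
    simp only [Pi.sub_apply, hzU] at hS
    split_ifs at hS with h
    · simp at hS
    · rw [sub_zero] at hS
      obtain ⟨h1, h2⟩ := hz _ hS
      exact ⟨((hFLU S).1 h1).resolve_right h, h2⟩
  have hzUs : Sup U p zU := by
    intro S hS
    simp only [hzU] at hS
    split_ifs at hS with h
    · exact ⟨h, (hz _ hS).2⟩
    · simp at hS
  obtain ⟨wU, hwU, hwU'⟩ := hU zU hzUs (fun T hT => by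
    have := hzLU _ _ hzL T hT
    rw [d0_sub, hdz T ((hFLU T).2 (Or.inr hT))] at this
    simpa using this)
  have hwUF : Sup F (p+1) wU := fun S hS => ⟨(hFLU S).2 (Or.inr (hwU S hS).1), (hwU S hS).2⟩
  have hs := Sup_dF hwUF
  obtain ⟨wL, hwL, hwL'⟩ := hL (z - dF F wU) (by
      intro S hS
      by_cases h : z S ≠ 0 ∨ dF F wU S ≠ 0
      · have h' : S ∈ F ∧ S.card = p := by
          rcases h with h | h
          · exact hz _ h
          · exact hs _ h
        refine ⟨((hFLU S).1 h'.1).resolve_right fun hSU => hS ?_, h'.2⟩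
        simp only [Pi.sub_apply, dF, if_pos h'.1]
        rw [hwU' S hSU]; simp [hzU, hSU]
      · push Not at h
        exact absurd (by simp [h.1, h.2]) hS)
    (by
      intro T hT
      have hT' := (hFLU T).2 (Or.inl hT)
      rw [d0_sub, hdz T hT', d0_dF hF hwUF hT', sub_zero])
  refine ⟨wU + wL, ?_, ?_⟩
  · intro S hS
    by_cases h : wU S = 0
    · have : wL S ≠ 0 := by simpa [h] using hS
      exact ⟨(hFLU S).2 (Or.inl (hwL S this).1), (hwL S this).2⟩
    · exact hwUF S h
  · intro T hT
    rw [d0_add]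
    rcases (hFLU T).1 hT with h | h
    · rw [hwL' T h]; simp [dF, hT]
    · rw [hzLU _ _ hwL T h, hwU' T h]; simp [hzU, h]

lemma Ex_cone {F : Set (Finset ι)} (hF : Cvx F) (k : ι) (h1 : ∀ S ∈ F, insert k S ∈ F)
    (h2 : ∀ S ∈ F, S.erase k ∈ F) (p : ℕ) : Ex K F p := by
  intro z hz hdz
  set w : Finset ι → K := fun S => if k ∈ S then sg K (S.erase k) k * z (S.erase k) else 0 with hw
  have hws : Sup F (p+1) w := by
    intro S hS
    simp only [hw] at hS
    split_ifs at hS with h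
    · obtain ⟨ha, hb⟩ := hz _ (right_ne_zero_of_mul hS)
      refine ⟨by simpa [Finset.insert_erase h] using h1 _ ha, ?_⟩
      rw [Finset.card_erase_of_mem h] at hb
      have := Finset.card_pos.2 ⟨k, h⟩
      omega
    · simp at hS
  have hd : ∀ T ∈ F, k ∉ T → d0 w T = z T := by
    intro T hT hk
    unfold d0
    rw [Finset.sum_eq_single k]
    · simp only [hk, if_false, hw, Finset.mem_insert_self, if_true, Finset.erase_insert hk]
      rw [← mul_assoc, sg_sq, one_mul]
    · intro m _ hm
      have : k ∉ insert m T := by simp [hk, hm.symm]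
      simp [hw, this]
    · simp
  refine ⟨w, hws, ?_⟩
  set x := z - dF F w with hx
  have hdx : ∀ T ∈ F, d0 x T = 0 := by
    intro T hT
    rw [hx, d0_sub, hdz T hT, d0_dF hF hws hT, sub_zero]
  have hxk : ∀ T, k ∉ T → x T = 0 := by
    intro T hT
    by_cases h : T ∈ F
    · simp [hx, dF, h, hd T h hT]
    · have : z T = 0 := by
        by_contra h'
        exact h (hz _ h').1
      simp [hx, dF, h, this]
  have hx0 : ∀ S ∈ F, x S = 0 := by
    intro S hS
    by_cases hk : k ∈ S
    · have := hdx _ (h2 S hS)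
      unfold d0 at this
      rw [Finset.sum_eq_single k] at this
      · simp only [Finset.notMem_erase, if_false, Finset.insert_erase hk] at this
        have hne : sg K (S.erase k) k ≠ 0 := left_ne_zero_of_mul_eq_one (sg_sq _ _)
        exact (mul_eq_zero.1 this).resolve_left hne
      · intro m _ hm
        rw [hxk (insert m (S.erase k)) (by simp [hm.symm])]
        simp
      · simp
    · exact hxk S hk
  intro T hT
  have := hx0 T hT
  simp only [hx, Pi.sub_apply, dF, if_pos hT] at this
  exact (sub_eq_zero.1 this).symm

lemma Ex_empty {F : Set (Finset ι)} {p : ℕ} (h : ∀ S ∈ F, S.card ≠ p) : Ex K F p := by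
  intro z hz _
  have : z = 0 := by
    ext S
    by_contra h'
    exact h S (hz S h').1 (hz S h').2
  refine ⟨0, fun S hS => by simp at hS, ?_⟩
  intro T _
  subst this
  simp [d0]

lemma Ex_component {F G : Set (Finset ι)} (hGF : G ⊆ F)
    (hG : ∀ S ∈ G, ∀ T ∈ F, S ⊆ T ∨ T ⊆ S → T ∈ G) {p : ℕ} (h : Ex K F p) : Ex K G p := by
  classical
  intro z hz hdz
  obtain ⟨w, hw, hw'⟩ := h z (fun S hS => ⟨hGF (hz S hS).1, (hz S hS).2⟩) (fun T hT => by
    by_contra hne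
    obtain ⟨k, hk, h⟩ := d0_ne hne
    exact hne (hdz T (hG _ (hz _ h).1 T hT (Or.inr (Finset.subset_insert _ _)))))
  refine ⟨fun S => if S ∈ G then w S else 0, ?_, ?_⟩
  · intro S hS
    simp only at hS
    split_ifs at hS with h
    · exact ⟨h, (hw S hS).2⟩
    · simp at hS
  · intro T hT
    rw [← hw' T (hGF hT)]
    unfold d0
    refine Finset.sum_congr rfl fun k _ => ?_
    beta_reduce
    split_ifs with h1 h2
    · rfl
    · rfl
    · by_cases hne : w (insert k T) = 0
      · rw [hne]
      · exact absurd (hG T hT _ (hw _ hne).1 (Or.inl (Finset.subset_insert _ _))) h2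

end Alg

end FB

namespace FB

section LQ

variable {K : Type} [Field K] {ι : Type} [Fintype ι] [DecidableEq ι] [LinearOrder ι]
variable {V : Type} [DecidableEq V]

/-- the strand of edge sets -/
def Fam (D : ι → Finset V) (A B : Finset ι) (j : ℕ) : Set (Finset ι) :=
  {S | B ⊆ S ∧ S ⊆ A ∪ B ∧ (S.biUnion D).card = j}

lemma Fam_cvx (D : ι → Finset V) (A B : Finset ι) (j : ℕ) : Cvx (Fam D A B j) := by
  rintro S T U ⟨h1, h2, h3⟩ ⟨h4, h5, h6⟩ hST hTU
  refine ⟨h1.trans hST, hTU.trans h5, le_antisymm ?_ ?_⟩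
  · rw [← h6]; exact Finset.card_le_card (Finset.biUnion_subset_biUnion_of_subset_left _ hTU)
  · rw [← h3]; exact Finset.card_le_card (Finset.biUnion_subset_biUnion_of_subset_left _ hST)

lemma Fam_split (D : ι → Finset V) (A B : Finset ι) (j : ℕ) (e : ι) (heB : e ∉ B) {p : ℕ}
    (he : e ∈ A)
    (h1 : Ex K (Fam D (A.erase e) B j) p) (h2 : Ex K (Fam D (A.erase e) (insert e B) j) p) :
    Ex K (Fam D A B j) p := by
  refine Ex_split (Fam_cvx D A B j) ?_ ?_ h1 h2
  · intro S
    simp only [Fam, Set.mem_setOf_eq]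
    by_cases heS : e ∈ S
    · constructor
      · rintro ⟨a, b, c⟩
        refine Or.inr ⟨Finset.insert_subset heS a, ?_, c⟩
        intro x hx
        have := b hx
        simp only [Finset.mem_union, Finset.mem_insert, Finset.mem_erase] at this ⊢
        tauto
      · rintro (⟨a, b, c⟩ | ⟨a, b, c⟩)
        · have := b heS
          simp [heB] at this
        · refine ⟨(Finset.subset_insert _ _).trans a, ?_, c⟩
          intro x hx
          have := b hx
          simp only [Finset.mem_union, Finset.mem_insert, Finset.mem_erase] at this ⊢
          rcases this with h | h | h
          · tauto
          · subst h; tauto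
          · tauto
    · constructor
      · rintro ⟨a, b, c⟩
        refine Or.inl ⟨a, ?_, c⟩
        intro x hx
        have := b hx
        have hne : x ≠ e := fun h => heS (h ▸ hx)
        simp only [Finset.mem_union, Finset.mem_erase] at this ⊢
        tauto
      · rintro (⟨a, b, c⟩ | ⟨a, b, c⟩)
        · refine ⟨a, b.trans (Finset.union_subset_union_left (Finset.erase_subset _ _)), c⟩
        · exact absurd (a (Finset.mem_insert_self _ _)) heS
  · rintro S ⟨_, b, _⟩ T ⟨a', _, _⟩ hTS
    have := b (hTS (a' (Finset.mem_insert_self _ _)))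
    simp [heB] at this

lemma Fam_cone (D : ι → Finset V) (A B : Finset ι) (j : ℕ) (e : ι) (heA : e ∈ A) (heB : e ∉ B)
    (h : D e ⊆ B.biUnion D) (p : ℕ) : Ex K (Fam D A B j) p := by
  refine Ex_cone (Fam_cvx D A B j) e ?_ ?_ p
  · rintro S ⟨a, b, c⟩
    refine ⟨a.trans (Finset.subset_insert _ _),
      Finset.insert_subset (Finset.mem_union_left _ heA) b, ?_⟩
    rw [Finset.biUnion_insert, Finset.union_eq_right.2, c]
    exact h.trans (Finset.biUnion_subset_biUnion_of_subset_left _ a)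
  · rintro S ⟨a, b, c⟩
    have a' : B ⊆ S.erase e := fun x hx => Finset.mem_erase.2 ⟨fun hh => heB (hh ▸ hx), a hx⟩
    refine ⟨a', (Finset.erase_subset _ _).trans b, ?_⟩
    rw [← c]
    congr 1
    apply Finset.Subset.antisymm
    · exact Finset.biUnion_subset_biUnion_of_subset_left _ (Finset.erase_subset _ _)
    · intro x hx
      obtain ⟨k, hk, hxk⟩ := Finset.mem_biUnion.1 hx
      by_cases hke : k = e
      · subst hke
        exact Finset.biUnion_subset_biUnion_of_subset_left _ a' (h hxk)
      · exact Finset.mem_biUnion.2 ⟨k, Finset.mem_erase.2 ⟨hke, hk⟩, hxk⟩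

/-- colon is generated by variables -/
def Good (D : ι → Finset V) (A : Finset ι) (m : ι) : Prop :=
  ∀ e ∈ A, ∃ e' ∈ A, (D e' \ D m).card = 1 ∧ D e' \ D m ⊆ D e \ D m

lemma vars (D : ι → Finset V) (m : ι) (hm2 : (D m).card = 2) (j p : ℕ) (hj : j ≠ p + 1) :
    ∀ (N : ℕ) (A : Finset ι), A.card = N → m ∉ A → Good D A m → Ex K (Fam D A {m} j) p := by
  intro N
  induction N with
  | zero =>
    intro A hA _ _
    have : A = ∅ := Finset.card_eq_zero.1 hA
    subst this
    refine Ex_empty ?_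
    rintro S ⟨a, b, c⟩ hS
    have : S = {m} := Finset.Subset.antisymm (by simpa using b) a
    subst this
    simp at c hS
    omega
  | succ N ih =>
    intro A hA hmA hg
    by_cases hred : ∃ e ∈ A, ∃ e' ∈ A, e ≠ e' ∧ (D e' \ D m).card = 1 ∧ D e' \ D m ⊆ D e \ D m
    · obtain ⟨e, he, e', he', hne, hc, hs⟩ := hred
      refine Fam_split D A {m} j e (by rintro h; simp at h; exact hmA (h ▸ he)) he ?_ ?_
      · refine ih _ (by rw [Finset.card_erase_of_mem he]; omega)
          (fun h => hmA (Finset.mem_of_mem_erase h)) ?_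
        intro f hf
        obtain ⟨f', hf', h1, h2⟩ := hg f (Finset.mem_of_mem_erase hf)
        by_cases hfe : f' = e
        · subst hfe
          exact ⟨e', Finset.mem_erase.2 ⟨hne.symm, he'⟩, hc, hs.trans h2⟩
        · exact ⟨f', Finset.mem_erase.2 ⟨hfe, hf'⟩, h1, h2⟩
      · refine Fam_cone D _ _ j e' (Finset.mem_erase.2 ⟨hne.symm, he'⟩) ?_ ?_ p
        · simp only [Finset.mem_insert, Finset.mem_singleton, not_or]
          exact ⟨hne.symm, fun h => hmA (h ▸ he')⟩
        · intro x hx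
          simp only [Finset.mem_biUnion, Finset.mem_insert, Finset.mem_singleton]
          by_cases hxm : x ∈ D m
          · exact ⟨m, Or.inr rfl, hxm⟩
          · exact ⟨e, Or.inl rfl, (Finset.mem_sdiff.1 (hs (Finset.mem_sdiff.2 ⟨hx, hxm⟩))).1⟩
    · push Not at hred
      have hsing : ∀ e ∈ A, (D e \ D m).card = 1 := by
        intro e he
        obtain ⟨e', he', h1, h2⟩ := hg e he
        by_cases h : e = e'
        · rw [h]; exact h1
        · exact absurd h2 (hred e he e' he' h h1)
      have hdisj : ∀ e ∈ A, ∀ e' ∈ A, e ≠ e' → Disjoint (D e \ D m) (D e' \ D m) := by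
        intro e he e' he' hne
        rw [Finset.disjoint_left]
        intro x hx hx'
        refine hred e he e' he' hne (hsing e' he') ?_
        obtain ⟨y, hy⟩ := Finset.card_eq_one.1 (hsing e' he')
        rw [hy] at hx' ⊢
        rw [Finset.mem_singleton] at hx'
        subst hx'
        simpa using hx
      refine Ex_empty ?_
      rintro S ⟨a, b, c⟩ hS
      apply hj
      have hmS : m ∈ S := a (Finset.mem_singleton_self m)
      have hSA : S.erase m ⊆ A := by
        intro x hx
        obtain ⟨h1, h2⟩ := Finset.mem_erase.1 hx
        have := b h2
        simp only [Finset.mem_union, Finset.mem_singleton] at this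
        tauto
      have hu : S.biUnion D = D m ∪ (S.erase m).biUnion (fun e => D e \ D m) := by
        ext x
        simp only [Finset.mem_biUnion, Finset.mem_union, Finset.mem_sdiff, Finset.mem_erase]
        constructor
        · rintro ⟨k, hk, hx⟩
          by_cases hxm : x ∈ D m
          · exact Or.inl hxm
          · exact Or.inr ⟨k, ⟨fun h => hxm (h ▸ hx), hk⟩, hx, hxm⟩
        · rintro (h | ⟨k, ⟨_, hk⟩, hx, _⟩)
          · exact ⟨m, hmS, h⟩
          · exact ⟨k, hk, hx⟩
      rw [hu, Finset.card_union_of_disjoint, Finset.card_biUnion, Finset.sum_congr rfl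
        (fun e he => hsing e (hSA he)), hm2] at c
      · rw [Finset.sum_const, Finset.card_erase_of_mem hmS] at c
        have := Finset.card_pos.2 ⟨m, hmS⟩
        simp at c
        omega
      · intro e he e' he' hne
        exact hdisj e (hSA he) e' (hSA he') hne
      · rw [Finset.disjoint_left]
        intro x hx hx'
        simp only [Finset.mem_biUnion, Finset.mem_sdiff] at hx'
        obtain ⟨_, _, _, h⟩ := hx'
        exact h hx

/-- linear quotients -/
inductive LQ (D : ι → Finset V) : Finset ι → Prop
  | empty : LQ D ∅
  | step (A : Finset ι) (m : ι) : LQ D A → m ∉ A → Good D A m → LQ D (insert m A)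

lemma LQ.ex {D : ι → Finset V} (hD : ∀ e, (D e).card = 2) {A : Finset ι} (h : LQ D A)
    {p j : ℕ} (hp : 1 ≤ p) (hj : j ≠ p + 1) : Ex K (Fam D A ∅ j) p := by
  induction h with
  | empty =>
    refine Ex_empty ?_
    rintro S ⟨a, b, c⟩ hS
    have : S = ∅ := by simpa using b
    subst this
    simp at hS; omega
  | step A m hA hm hg ih =>
    refine Fam_split D _ ∅ j m (by simp) (Finset.mem_insert_self _ _) ?_ ?_
    · rwa [Finset.erase_insert hm]
    · rw [Finset.erase_insert hm]
      exact vars D m (hD m) j p hj _ A rfl hm hg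

lemma LQ.chordal_step {D : ι → Finset V} {A₀ A : Finset ι} (v : V) (hD : ∀ e, (D e).card = 2)
    (hinj : Function.Injective D)
    (h0 : ∀ e ∈ A₀, v ∈ D e) (h : LQ D A) (hA : ∀ e ∈ A, v ∉ D e)
    (hs : ∀ e ∈ A, ∃ f ∈ A₀, ∃ a ∈ D e, a ∈ D f) : LQ D (A₀ ∪ A) := by
  have hpair : ∀ e ∈ A₀, ∃ u, u ≠ v ∧ D e = {v, u} := by
    intro e he
    obtain ⟨x, y, hxy, h⟩ := Finset.card_eq_two.1 (hD e)
    have := h0 e he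
    rw [h] at this
    simp only [Finset.mem_insert, Finset.mem_singleton] at this
    rcases this with rfl | rfl
    · exact ⟨y, hxy.symm, h⟩
    · exact ⟨x, hxy, by rw [h, Finset.pair_comm]⟩
  induction h with
  | empty =>
    rw [Finset.union_empty]
    clear hs hA
    induction A₀ using Finset.induction_on with
    | empty => exact LQ.empty
    | insert m A hm ih =>
      refine LQ.step A m (ih (fun e he => h0 e (Finset.mem_insert_of_mem he))
        (fun e he => hpair e (Finset.mem_insert_of_mem he))) hm ?_
      intro e he
      refine ⟨e, he, ?_, Finset.Subset.refl _⟩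
      obtain ⟨u, hu, hu'⟩ := hpair e (Finset.mem_insert_of_mem he)
      obtain ⟨w, hw, hw'⟩ := hpair m (Finset.mem_insert_self _ _)
      have huw : u ≠ w := by
        rintro rfl
        have := hinj (hu'.trans hw'.symm)
        exact hm (this ▸ he)
      have : D e \ D m = {u} := by
        rw [hu', hw']
        ext x
        simp only [Finset.mem_sdiff, Finset.mem_insert, Finset.mem_singleton]
        constructor
        · tauto
        · rintro rfl; tauto
      rw [this]; rfl
  | step A m hA' hm hg ih =>
    rw [Finset.union_insert]
    refine LQ.step _ m (ih (fun e he => hA e (Finset.mem_insert_of_mem he))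
        (fun e he => hs e (Finset.mem_insert_of_mem he))) ?_ ?_
    · intro h
      rcases Finset.mem_union.1 h with h | h
      · exact hA m (Finset.mem_insert_self _ _) (h0 m h)
      · exact hm h
    · have hvm := hA m (Finset.mem_insert_self _ _)
      intro e he
      rcases Finset.mem_union.1 he with he | he
      · obtain ⟨f, hf, a, ha, haf⟩ := hs m (Finset.mem_insert_self _ _)
        have : D f \ D m = {v} := by
          obtain ⟨u, hu, hu'⟩ := hpair f hf
          rw [hu'] at haf ⊢
          have hav : a ≠ v := fun h => hvm (h ▸ ha)
          have : a = u := by simpa [hav] using haf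
          subst this
          ext x
          simp only [Finset.mem_sdiff, Finset.mem_insert, Finset.mem_singleton]
          constructor
          · rintro ⟨rfl | rfl, h⟩
            · rfl
            · exact absurd ha h
          · rintro rfl; tauto
        refine ⟨f, Finset.mem_union_left _ hf, by rw [this]; rfl, ?_⟩
        rw [this, Finset.singleton_subset_iff, Finset.mem_sdiff]
        exact ⟨h0 e he, hvm⟩
      · obtain ⟨e', he', h⟩ := hg e he
        exact ⟨e', Finset.mem_union_right _ he', h⟩

end LQ

end FB

namespace FB

section Dirac

variable {V : Type}

/-- the graph restricted to a set -/
def res (H : SimpleGraph V) (Z : Set V) : SimpleGraph V where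
  Adj a b := H.Adj a b ∧ a ∈ Z ∧ b ∈ Z
  symm := ⟨fun a b h => ⟨h.1.symm, h.2.2, h.2.1⟩⟩
  loopless := ⟨fun a h => H.loopless.irrefl a h.1⟩

lemma res_mono (H : SimpleGraph V) {Z Z' : Set V} (h : Z ⊆ Z') : res H Z ≤ res H Z' :=
  fun _ _ hab => ⟨hab.1, h hab.2.1, h hab.2.2⟩

lemma geo_adj {R : SimpleGraph V} {x y : V} (q : R.Walk x y) (hq : q.length = R.dist x y)
    {i j : ℕ} (hij : i < j) (hj : j ≤ q.length) (h : R.Adj (q.getVert i) (q.getVert j)) :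
    j = i + 1 := by
  by_contra hne
  have := SimpleGraph.dist_le (((q.take i).append (SimpleGraph.Walk.cons h (q.drop j))))
  rw [SimpleGraph.Walk.length_append, SimpleGraph.Walk.length_cons, SimpleGraph.Walk.take_length,
    SimpleGraph.Walk.drop_length] at this
  omega

lemma zmod_succ {l : ℕ} [NeZero l] (a b : ZMod l) (hl : 1 < l) :
    b = a + 1 ↔ (b.val = a.val + 1 ∨ (a.val + 1 = l ∧ b.val = 0)) := by
  have ha := ZMod.val_lt a
  have hb := ZMod.val_lt b
  haveI : Fact (1 < l) := ⟨hl⟩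
  rw [← (ZMod.val_injective l).eq_iff, ZMod.val_add, ZMod.val_one]
  by_cases h : a.val + 1 = l
  · rw [h, Nat.mod_self]; omega
  · rw [Nat.mod_eq_of_lt (by omega)]; omega

lemma mk_cycle {H : SimpleGraph V} {v x y : V} {Z : Set V} (hxy : x ≠ y) (hnxy : ¬ H.Adj x y)
    (hvx : H.Adj v x) (hvy : H.Adj v y) (hZ : ∀ z ∈ Z, z ≠ v ∧ ¬ H.Adj v z)
    (hr : (res H (Z ∪ {x, y})).Reachable x y) : ∃ l, 3 < l ∧ EP.HasInducedCycle H l := by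
  set Y := Z ∪ {x, y} with hY
  obtain ⟨q, hq⟩ := hr.exists_walk_length_eq_dist
  have hp := q.isPath_of_length_eq_dist hq
  have hlen : 2 ≤ q.length := by
    by_contra h
    have : q.length = 0 ∨ q.length = 1 := by omega
    rcases this with h | h
    · exact hxy (SimpleGraph.Walk.eq_of_length_eq_zero h)
    · exact hnxy (SimpleGraph.Walk.adj_of_length_eq_one h).1
  have hinj := hp.getVert_injOn
  have hmem : ∀ i, i ≤ q.length → q.getVert i ∈ Y := by
    intro i hi
    rcases Nat.lt_or_ge i q.length with h | h
    · exact (q.adj_getVert_succ h).2.1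
    · have : i = q.length := by omega
      subst this
      rw [q.getVert_length]; simp [hY]
  have hv : ∀ i, i ≤ q.length → q.getVert i ≠ v := by
    intro i hi h
    have := hmem i hi
    rw [h, hY] at this
    rcases this with h | h | h
    · exact (hZ v h).1 rfl
    · subst h; exact H.loopless.irrefl _ hvx
    · have h : v = y := h
      subst h; exact H.loopless.irrefl _ hvy
  have hvadj : ∀ i, i ≤ q.length → (H.Adj v (q.getVert i) ↔ i = 0 ∨ i = q.length) := by
    intro i hi
    constructor
    · intro h
      rcases hmem i hi with h' | h' | h'
      · exact absurd h (hZ _ h').2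
      · left
        refine hinj (by simpa using hi) (by simp) ?_
        rw [h', q.getVert_zero]
      · right
        refine hinj (by simpa using hi) (by simp) ?_
        rw [q.getVert_length]; exact h'
    · rintro (rfl | rfl)
      · rw [q.getVert_zero]; exact hvx
      · rw [q.getVert_length]; exact hvy
  have hqadj : ∀ i j, i ≤ q.length → j ≤ q.length →
      (H.Adj (q.getVert i) (q.getVert j) ↔ j = i + 1 ∨ i = j + 1) := by
    intro i j hi hj
    constructor
    · intro h
      have h' : (res H Y).Adj (q.getVert i) (q.getVert j) := ⟨h, hmem i hi, hmem j hj⟩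
      rcases lt_trichotomy i j with hij | hij | hij
      · left; exact geo_adj q hq hij hj h'
      · subst hij; exact absurd h (H.loopless.irrefl _)
      · right; exact geo_adj q hq hij hi h'.symm
    · rintro (rfl | rfl)
      · exact (q.adj_getVert_succ (by omega)).1
      · exact (q.adj_getVert_succ (by omega)).1.symm
  set l := q.length + 2 with hl
  haveI : NeZero l := ⟨by omega⟩
  refine ⟨l, by omega, fun a => if a.val = 0 then v else q.getVert (a.val - 1), ?_, ?_⟩
  · intro a b hab
    apply ZMod.val_injective
    have ha := ZMod.val_lt a
    have hb := ZMod.val_lt b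
    simp only at hab
    split_ifs at hab with h1 h2 h2
    · omega
    · exact absurd hab.symm (hv _ (by omega))
    · exact absurd hab (hv _ (by omega))
    · have := hinj (by simp; omega) (by simp; omega) hab
      omega
  · intro a b
    rw [zmod_succ a b (by omega), zmod_succ b a (by omega)]
    have ha := ZMod.val_lt a
    have hb := ZMod.val_lt b
    simp only
    split_ifs with h1 h2 h2
    · simp only [SimpleGraph.irrefl, false_iff]; omega
    · rw [hvadj _ (by omega)]; omega
    · rw [H.adj_comm, hvadj _ (by omega)]; omega
    · rw [hqadj _ _ (by omega) (by omega)]; omega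

/-- `w` simplicial in `X` -/
def Simp (H : SimpleGraph V) (X : Finset V) (w : V) : Prop :=
  w ∈ X ∧ ∀ a ∈ X, ∀ b ∈ X, H.Adj w a → H.Adj w b → a ≠ b → H.Adj a b

lemma dirac_aux {H : SimpleGraph V} (hH : EP.Chordal H) : ∀ (N : ℕ) (X : Finset V), X.card = N →
    ∀ v ∈ X, ∀ u ∈ X, u ≠ v → ¬ H.Adj v u → ∃ w, Simp H X w ∧ w ≠ v ∧ ¬ H.Adj v w := by
  classical
  intro N
  induction N using Nat.strong_induction_on with
  | _ N ih =>
  intro X hX v hv u hu huv hnvu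
  set Z : Set V := {z | z ∈ X ∧ z ≠ v ∧ ¬ H.Adj v z} with hZ
  set C : Finset V := X.filter (fun c => c ∈ Z ∧ (res H Z).Reachable u c) with hC
  set S : Finset V := X.filter (fun s => H.Adj v s ∧ ∃ c ∈ C, H.Adj c s) with hS
  have hCm : ∀ c, c ∈ C ↔ c ∈ Z ∧ (res H Z).Reachable u c := by
    intro c
    simp only [hC, Finset.mem_filter, hZ, Set.mem_setOf_eq]; tauto
  have hSm : ∀ s, s ∈ S ↔ s ∈ X ∧ H.Adj v s ∧ ∃ c ∈ C, H.Adj c s := by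
    intro s; simp [hS]
  have huC : u ∈ C := (hCm u).2 ⟨⟨hu, huv, hnvu⟩, SimpleGraph.Reachable.refl _⟩
  -- neighbours of C are in C ∪ S
  have hnb : ∀ c ∈ C, ∀ a ∈ X, H.Adj c a → a ∈ C ∪ S := by
    intro c hc a ha hca
    have hc' := (hCm c).1 hc
    by_cases hva : H.Adj v a
    · exact Finset.mem_union_right _ ((hSm a).2 ⟨ha, hva, c, hc, hca⟩)
    · refine Finset.mem_union_left _ ((hCm a).2 ?_)
      have haZ : a ∈ Z := by
        refine ⟨ha, ?_, hva⟩
        rintro rfl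
        exact hc'.1.2.2 hca.symm
      exact ⟨haZ, hc'.2.trans (SimpleGraph.Adj.reachable ⟨hca, hc'.1, haZ⟩)⟩
  have hclq : ∀ x ∈ S, ∀ y ∈ S, x ≠ y → H.Adj x y := by
    intro x hx y hy hxy
    by_contra hn
    obtain ⟨hxX, hvx, c, hc, hcx⟩ := (hSm x).1 hx
    obtain ⟨hyX, hvy, c', hc', hcy⟩ := (hSm y).1 hy
    rw [hCm] at hc hc'
    have hr : (res H (Z ∪ {x, y})).Reachable x y := by
      have h1 : (res H (Z ∪ {x, y})).Reachable x c :=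
        SimpleGraph.Adj.reachable ⟨hcx.symm, by simp, Or.inl hc.1⟩
      have h2 : (res H (Z ∪ {x, y})).Reachable c c' :=
        (hc.2.symm.trans hc'.2).mono (res_mono H Set.subset_union_left)
      have h3 : (res H (Z ∪ {x, y})).Reachable c' y :=
        SimpleGraph.Adj.reachable ⟨hcy, Or.inl hc'.1, by simp⟩
      exact (h1.trans h2).trans h3
    obtain ⟨l, hl, h⟩ := mk_cycle hxy hn hvx hvy (fun z hz => hz.2) hr
    exact hH l hl h
  have hsub : C ∪ S ⊆ X := Finset.union_subset (Finset.filter_subset _ _) (Finset.filter_subset _ _)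
  have hvn : v ∉ C ∪ S := by
    intro h
    rcases Finset.mem_union.1 h with h | h
    · exact ((hCm v).1 h).1.2.1 rfl
    · exact H.loopless.irrefl _ ((hSm v).1 h).2.1
  have hcard : (C ∪ S).card < N := by
    rw [← hX]
    exact Finset.card_lt_card ⟨hsub, fun h => hvn (h hv)⟩
  have key : ∃ w ∈ C, Simp H (C ∪ S) w := by
    by_cases hall : ∀ a ∈ C ∪ S, ∀ b ∈ C ∪ S, a ≠ b → H.Adj a b
    · exact ⟨u, huC, Finset.mem_union_left _ huC, fun a ha b hb _ _ hab => hall a ha b hb hab⟩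
    · by_cases hs : ∃ s ∈ S, ∃ b ∈ C ∪ S, b ≠ s ∧ ¬ H.Adj s b
      · obtain ⟨s, hs, b, hb, hbs, hn⟩ := hs
        obtain ⟨w, hw, hws, hwn⟩ := ih _ hcard _ rfl s (Finset.mem_union_right _ hs) b hb hbs hn
        refine ⟨w, ?_, hw⟩
        rcases Finset.mem_union.1 hw.1 with h | h
        · exact h
        · exact absurd (hclq s hs w h hws.symm) hwn
      · push Not at hall hs
        obtain ⟨a, ha, b, hb, hab, hn⟩ := hall
        obtain ⟨w, hw, hws, hwn⟩ := ih _ hcard _ rfl a ha b hb hab.symm hn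
        refine ⟨w, ?_, hw⟩
        rcases Finset.mem_union.1 hw.1 with h | h
        · exact h
        · exact absurd (hs w h a ha hws.symm).symm hwn
  obtain ⟨w, hwC, hw⟩ := key
  have hwZ := ((hCm w).1 hwC).1
  refine ⟨w, ⟨hwZ.1, ?_⟩, hwZ.2⟩
  intro a ha b hb hwa hwb hab
  exact hw.2 a (hnb w hwC a ha hwa) b (hnb w hwC b hb hwb) hwa hwb hab

lemma dirac {H : SimpleGraph V} (hH : EP.Chordal H) (X : Finset V) (hX : X.Nonempty) :
    ∃ w, Simp H X w := by
  by_cases hall : ∀ a ∈ X, ∀ b ∈ X, a ≠ b → H.Adj a b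
  · obtain ⟨w, hw⟩ := hX
    exact ⟨w, hw, fun a ha b hb _ _ hab => hall a ha b hb hab⟩
  · push Not at hall
    obtain ⟨a, ha, b, hb, hab, hn⟩ := hall
    obtain ⟨w, hw, _⟩ := dirac_aux hH _ X rfl a ha b hb hab.symm hn
    exact ⟨w, hw⟩

end Dirac

end FB

namespace FB

section Euler

variable {K : Type} [Field K] {ι : Type} [Fintype ι] [DecidableEq ι] [LinearOrder ι]

open Classical in
/-- extension by zero -/
noncomputable def ext0 (G : Set (Finset ι)) (p : ℕ) (y : {S : Finset ι // S ∈ G ∧ S.card = p} → K) :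
    Finset ι → K := fun S => if h : S ∈ G ∧ S.card = p then y ⟨S, h⟩ else 0

lemma ext0_sup (G : Set (Finset ι)) (p : ℕ) (y : {S : Finset ι // S ∈ G ∧ S.card = p} → K) :
    Sup G p (ext0 G p y) := by
  intro S hS
  unfold ext0 at hS
  split_ifs at hS with h
  · exact h
  · simp at hS

lemma ext0_res (G : Set (Finset ι)) (p : ℕ) (z : Finset ι → K) (hz : Sup G p z) :
    ext0 G p (fun S => z S.1) = z := by
  ext S
  unfold ext0
  split_ifs with h
  · rfl
  · by_contra hne
    exact h (hz S (Ne.symm hne))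

/-- graded differential -/
noncomputable def dP (K : Type) [Field K] (G : Set (Finset ι)) (p : ℕ) :
    ({S : Finset ι // S ∈ G ∧ S.card = p + 1} → K) →ₗ[K]
      ({S : Finset ι // S ∈ G ∧ S.card = p} → K) where
  toFun y := fun T => d0 (ext0 G (p+1) y) T.1
  map_add' y y' := by
    ext T
    have : ext0 G (p+1) (y + y') = ext0 G (p+1) y + ext0 G (p+1) y' := by
      ext S; simp only [ext0, Pi.add_apply]; split_ifs <;> simp
    rw [this, d0_add]; rfl
  map_smul' c y := by
    ext T
    have : ext0 G (p+1) (c • y) = c • ext0 G (p+1) y := by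
      ext S; simp only [ext0, Pi.smul_apply]; split_ifs <;> simp
    rw [this, d0_smul]; rfl

lemma ext0_dP (G : Set (Finset ι)) (p : ℕ) (y) : ext0 G p (dP K G p y) = dF G (ext0 G (p+1) y) := by
  have h1 := Sup_dF (ext0_sup G (p+1) y)
  rw [← ext0_res G p _ h1]
  congr 1
  ext S
  simp [dP, dF, S.2.1]

lemma range_le_ker (G : Set (Finset ι)) (hG : Cvx G) (p : ℕ) :
    LinearMap.range (dP K G (p+1)) ≤ LinearMap.ker (dP K G p) := by
  rintro _ ⟨y, rfl⟩
  rw [LinearMap.mem_ker]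
  ext T
  have : d0 (ext0 G (p+1) (dP K G (p+1) y)) T.1 = 0 := by
    rw [ext0_dP]
    exact d0_dF hG (ext0_sup G _ y) T.2.1
  simpa [dP] using this

lemma ker_le_range (G : Set (Finset ι)) (p : ℕ) (h : Ex K G (p+1)) :
    LinearMap.ker (dP K G p) ≤ LinearMap.range (dP K G (p+1)) := by
  intro y hy
  rw [LinearMap.mem_ker] at hy
  obtain ⟨w, hw, hw'⟩ := h (ext0 G (p+1) y) (ext0_sup G _ y) (fun T hT => by
    by_contra hne
    obtain ⟨k, hk, h'⟩ := d0_ne hne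
    have hc := (ext0_sup G _ y _ h').2
    rw [Finset.card_insert_of_notMem hk] at hc
    exact hne (congrFun hy ⟨T, hT, by omega⟩))
  refine ⟨fun S => w S.1, ?_⟩
  ext T
  have : d0 (ext0 G (p+1+1) (fun S => w S.1)) T.1 = ext0 G (p+1) y T.1 := by
    rw [ext0_res G _ w hw]; exact hw' T.1 T.2.1
  rw [show dP K G (p+1) (fun S => w S.1) T = d0 (ext0 G (p+1+1) (fun S => w S.1)) T.1 from rfl, this]
  simp [ext0, T.2.1, T.2.2]

lemma alt_tel (R : ℕ → ℤ) (N : ℕ) :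
    ∑ p ∈ Finset.range N, (-1 : ℤ) ^ p * (R p + R (p+1)) = R 0 - (-1) ^ N * R N := by
  induction N with
  | zero => simp
  | succ N ih => rw [Finset.sum_range_succ, ih]; ring

open Classical in
lemma euler (K : Type) [Field K] (G : Set (Finset ι)) (hG : Cvx G) (h0 : ∅ ∉ G) (q : ℕ)
    (h : ∀ p, 1 ≤ p → p ≠ q → Ex K G p) :
    ∃ e : ℕ, ∑ S ∈ Finset.univ.filter (fun S => S ∈ G), (-1 : ℤ) ^ S.card = (-1) ^ q * e := by
  set c : ℕ → ℕ := fun p => Fintype.card {S : Finset ι // S ∈ G ∧ S.card = p} with hc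
  set R : ℕ → ℕ := fun p => Module.finrank K (LinearMap.range (dP K G p)) with hR
  have hle : ∀ p, R p + R (p+1) ≤ c (p+1) := by
    intro p
    have h1 := LinearMap.finrank_range_add_finrank_ker (dP K G p)
    rw [Module.finrank_fintype_fun_eq_card] at h1
    have h2 := Submodule.finrank_mono (range_le_ker (K := K) G hG p)
    simp only [hR, hc]; omega
  have heq : ∀ p, p + 1 ≠ q → c (p+1) = R p + R (p+1) := by
    intro p hp
    have h1 := LinearMap.finrank_range_add_finrank_ker (dP K G p)
    rw [Module.finrank_fintype_fun_eq_card] at h1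
    have h2 := Submodule.finrank_mono (ker_le_range (K := K) G p (h (p+1) (by omega) hp))
    have := hle p
    simp only [hR, hc] at this ⊢; omega
  have hc0 : c 0 = 0 := by
    simp only [hc]
    rw [Fintype.card_eq_zero_iff]
    refine ⟨fun S => h0 ?_⟩
    have := Finset.card_eq_zero.1 S.2.2
    rw [← this]; exact S.2.1
  have hR0 : R 0 = 0 := by
    have := Submodule.finrank_le (LinearMap.range (dP K G 0))
    rw [Module.finrank_fintype_fun_eq_card] at this
    simp only [hR]
    simp only [hc] at hc0
    omega
  set N := max (Fintype.card ι) q with hN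
  have hcN : c (N + 1) = 0 := by
    simp only [hc]
    rw [Fintype.card_eq_zero_iff]
    refine ⟨fun S => ?_⟩
    have := Finset.card_le_univ S.1
    rw [S.2.2] at this
    omega
  have hRN : R N = 0 := by have := hle N; omega
  have hsum : ∑ S ∈ Finset.univ.filter (fun S => S ∈ G), (-1 : ℤ) ^ S.card =
      ∑ p ∈ Finset.range (N+1), (-1 : ℤ) ^ p * c p := by
    rw [← Finset.sum_fiberwise_of_maps_to (t := Finset.range (N+1)) (g := Finset.card)]
    · refine Finset.sum_congr rfl fun p _ => ?_
      rw [Finset.sum_congr rfl (g := fun _ => (-1 : ℤ)^p)]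
      · rw [Finset.sum_const, nsmul_eq_mul, mul_comm]
        congr 2
        rw [Finset.filter_filter]
        simp only [hc]
        rw [Fintype.card_subtype]
      · intro S hS
        rw [(Finset.mem_filter.1 hS).2]
    · intro S _
      have := Finset.card_le_univ S
      rw [Finset.mem_range]; omega
  rw [hsum, Finset.sum_range_succ', hc0]
  by_cases hq : q = 0
  · refine ⟨0, ?_⟩
    rw [Finset.sum_congr rfl (g := fun p => - ((-1 : ℤ) ^ p * ((R p : ℤ) + (R (p+1) : ℤ))))]
    · rw [Finset.sum_neg_distrib, alt_tel (fun p => (R p : ℤ))]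
      simp [hR0, hRN]
    · intro p _
      rw [heq p (by omega)]; push_cast; ring
  · obtain ⟨q', rfl⟩ : ∃ q', q = q' + 1 := ⟨q - 1, by omega⟩
    obtain ⟨e, he⟩ := Nat.exists_eq_add_of_le (hle q')
    refine ⟨e, ?_⟩
    rw [Finset.sum_congr rfl (g := fun p => - ((-1 : ℤ) ^ p * ((R p : ℤ) + (R (p+1) : ℤ))) +
      (if p = q' then (-1)^(q'+1) * (e : ℤ) else 0))]
    · rw [Finset.sum_add_distrib, Finset.sum_neg_distrib, alt_tel (fun p => (R p : ℤ)),
        Finset.sum_ite_eq']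
      have : q' ∈ Finset.range N := by rw [Finset.mem_range]; omega
      simp [hR0, hRN, this]
    · intro p _
      split_ifs with hp
      · subst hp
        rw [he]; push_cast; ring
      · rw [heq p (by omega)]; push_cast; ring

open Classical in
lemma cover_sum {V : Type} [DecidableEq V] (D : ι → Finset V) (W : Finset V) :
    ∑ S ∈ Finset.univ.filter (fun S : Finset ι => S.biUnion D = W), (-1 : ℤ) ^ S.card =
      (-1) ^ W.card * ∑ Q ∈ W.powerset.filter (fun Q => ∀ e, ¬ D e ⊆ Q), (-1 : ℤ) ^ Q.card := by
  have key : ∀ Q : Finset V, ∑ S : Finset ι, (if S.biUnion D ⊆ Q then (-1 : ℤ) ^ S.card else 0) =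
      if ∀ e, ¬ D e ⊆ Q then 1 else 0 := by
    intro Q
    rw [← Finset.sum_filter]
    have : Finset.univ.filter (fun S : Finset ι => S.biUnion D ⊆ Q) =
        (Finset.univ.filter (fun e => D e ⊆ Q)).powerset := by
      ext S
      simp only [Finset.mem_filter, Finset.mem_univ, true_and, Finset.mem_powerset,
        Finset.biUnion_subset, Finset.subset_iff (s₁ := S)]
    rw [this, Finset.sum_powerset_neg_one_pow_card]
    congr 1
    rw [Finset.filter_eq_empty_iff]
    simp
  have ind : ∀ S : Finset ι, (if S.biUnion D = W then (-1 : ℤ) ^ S.card else 0) =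
      ∑ Q ∈ W.powerset, (-1) ^ W.card * ((-1) ^ Q.card *
        (if S.biUnion D ⊆ Q then (-1 : ℤ) ^ S.card else 0)) := by
    intro S
    by_cases hSW : S.biUnion D ⊆ W
    · have h1 := Finset.sum_powerset_neg_one_pow_card (x := W \ S.biUnion D)
      have h2 : ∑ Q ∈ W.powerset, (-1) ^ W.card * ((-1) ^ Q.card *
        (if S.biUnion D ⊆ Q then (-1 : ℤ) ^ S.card else 0)) =
          (-1) ^ S.card * ∑ T ∈ (W \ S.biUnion D).powerset, (-1 : ℤ) ^ T.card := by
        rw [Finset.mul_sum]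
        rw [show ∑ Q ∈ W.powerset, (-1) ^ W.card * ((-1) ^ Q.card *
          (if S.biUnion D ⊆ Q then (-1 : ℤ) ^ S.card else 0)) =
          ∑ Q ∈ W.powerset.filter (fun Q => S.biUnion D ⊆ Q), (-1) ^ W.card * ((-1) ^ Q.card *
            (-1 : ℤ) ^ S.card) by
              rw [Finset.sum_filter]
              refine Finset.sum_congr rfl fun Q _ => ?_
              split_ifs <;> simp]
        refine Finset.sum_bij' (fun Q _ => W \ Q) (fun T _ => W \ T) ?_ ?_ ?_ ?_ ?_
        · intro Q hQ
          simp only [Finset.mem_filter, Finset.mem_powerset] at hQ ⊢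
          exact Finset.sdiff_subset_sdiff (Finset.Subset.refl _) hQ.2
        · intro T hT
          simp only [Finset.mem_filter, Finset.mem_powerset] at hT ⊢
          refine ⟨Finset.sdiff_subset, ?_⟩
          intro x hx
          rw [Finset.mem_sdiff]
          exact ⟨hSW hx, fun hxT => (Finset.mem_sdiff.1 (hT hxT)).2 hx⟩
        · intro Q hQ
          simp only [Finset.mem_filter, Finset.mem_powerset] at hQ
          exact Finset.sdiff_sdiff_eq_self hQ.1
        · intro T hT
          simp only [Finset.mem_powerset] at hT
          exact Finset.sdiff_sdiff_eq_self (hT.trans Finset.sdiff_subset)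
        · intro Q hQ
          simp only [Finset.mem_filter, Finset.mem_powerset] at hQ
          have hc := Finset.card_sdiff_add_card_eq_card hQ.1
          rw [← hc, pow_add]
          have : ((-1 : ℤ) ^ Q.card) * (-1) ^ Q.card = 1 := by rw [← mul_pow]; simp
          linear_combination ((-1 : ℤ) ^ (W \ Q).card * (-1) ^ S.card) * this
      rw [h2, h1]
      have : S.biUnion D = W ↔ W \ S.biUnion D = ∅ := by
        rw [Finset.sdiff_eq_empty_iff_subset]
        exact ⟨fun h => h.ge, fun h => Finset.Subset.antisymm hSW h⟩
      simp only [this]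
      split_ifs <;> simp
    · rw [if_neg (fun h => hSW h.le), Finset.sum_eq_zero]
      intro Q hQ
      rw [if_neg (fun h => hSW (h.trans (Finset.mem_powerset.1 hQ)))]
      simp
  rw [Finset.sum_filter, Finset.sum_congr rfl (fun S _ => ind S), Finset.sum_comm, Finset.mul_sum,
    Finset.sum_filter]
  refine Finset.sum_congr rfl fun Q _ => ?_
  rw [← Finset.mul_sum, ← Finset.mul_sum, key Q]
  split_ifs <;> simp

lemma cyc_sum {V : Type} [DecidableEq V] (l : ℕ) [NeZero l] (hl : 3 < l) (f : ZMod l → V)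
    (hf : Function.Injective f) (P : Finset V → Prop) [DecidablePred P]
    (hP : ∀ Q, Q ⊆ Finset.univ.image f → (P Q ↔ ∀ i j : ZMod l, f i ∈ Q → f j ∈ Q → i ≠ j → (j = i + 1 ∨ i = j + 1))) :
    ∑ Q ∈ (Finset.univ.image f).powerset.filter P, (-1 : ℤ) ^ Q.card = 1 := by
  have hn : ∀ m : ℕ, 0 < m → m < l → (m : ZMod l) ≠ 0 := by
    intro m h1 h2 h
    rw [ZMod.natCast_eq_zero_iff] at h
    exact absurd (Nat.le_of_dvd h1 h) (by omega)
  have n1 : (1 : ZMod l) ≠ 0 := by simpa using hn 1 (by omega) (by omega)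
  have n2 : (2 : ZMod l) ≠ 0 := by simpa using hn 2 (by omega) (by omega)
  have n3 : (3 : ZMod l) ≠ 0 := by simpa using hn 3 (by omega) (by omega)
  have hs : ∀ i : ZMod l, i ≠ i + 1 := fun i h => n1 (by linear_combination -h)
  have hfs : ∀ i : ZMod l, f i ≠ f (i + 1) := fun i h => hs i (hf h)
  set s : ZMod l → Finset V := fun i => {f i}
  set t : ZMod l → Finset V := fun i => {f i, f (i+1)}
  have hsi : Function.Injective s := fun i j h => hf (Finset.singleton_injective h)
  have hti : Function.Injective t := by
    intro i j h
    have h1 : f i ∈ t j := by rw [← h]; simp [t]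
    have h2 : f (i+1) ∈ t j := by rw [← h]; simp [t]
    simp only [t, Finset.mem_insert, Finset.mem_singleton, hf.eq_iff] at h1 h2
    rcases h1 with h1 | h1
    · exact h1
    · rcases h2 with h2 | h2
      · exact absurd (show (2 : ZMod l) = 0 by linear_combination h2 - h1) n2
      · exact add_right_cancel h2
  have hsc : ∀ i, (s i).card = 1 := fun i => Finset.card_singleton _
  have htc : ∀ i, (t i).card = 2 := fun i => Finset.card_pair (hfs i)
  have hset : (Finset.univ.image f).powerset.filter P =
      insert ∅ (Finset.univ.image s ∪ Finset.univ.image t) := by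
    ext Q
    simp only [Finset.mem_filter, Finset.mem_powerset, Finset.mem_insert, Finset.mem_union,
      Finset.mem_image, Finset.mem_univ, true_and]
    rw [and_congr_right (hP Q)]
    constructor
    · rintro ⟨hQ, hq⟩
      have himg : ∀ x ∈ Q, ∃ i, f i = x := by
        intro x hx
        simpa using hQ hx
      rcases Nat.lt_or_ge 2 Q.card with h | h
      · obtain ⟨a, ha, b, hb, c, hc, hab, hac, hbc⟩ := Finset.two_lt_card.1 h
        obtain ⟨i, rfl⟩ := himg a ha
        obtain ⟨j, rfl⟩ := himg b hb
        obtain ⟨k, rfl⟩ := himg c hc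
        exfalso
        have e1 := hq i j ha hb (fun h => hab (congrArg f h))
        have e2 := hq j k hb hc (fun h => hbc (congrArg f h))
        have e3 := hq i k ha hc (fun h => hac (congrArg f h))
        rcases e1 with e1 | e1 <;> rcases e2 with e2 | e2 <;> rcases e3 with e3 | e3
        · exact n1 (by linear_combination e3 - e1 - e2)
        · exact n3 (by linear_combination -e3 - e1 - e2)
        · exact hac (congrArg f (by linear_combination e2 - e1))
        · exact hac (congrArg f (by linear_combination e2 - e1))
        · exact hac (congrArg f (by linear_combination e1 - e2))
        · exact hac (congrArg f (by linear_combination e1 - e2))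
        · exact n3 (by linear_combination -e3 - e1 - e2)
        · exact n1 (by linear_combination e3 - e1 - e2)
      · have : Q.card = 0 ∨ Q.card = 1 ∨ Q.card = 2 := by omega
        rcases this with h | h | h
        · exact Or.inl (Finset.card_eq_zero.1 h)
        · obtain ⟨x, rfl⟩ := Finset.card_eq_one.1 h
          obtain ⟨i, rfl⟩ := himg x (by simp)
          exact Or.inr (Or.inl ⟨i, rfl⟩)
        · obtain ⟨x, y, hxy, rfl⟩ := Finset.card_eq_two.1 h
          obtain ⟨i, rfl⟩ := himg x (by simp)
          obtain ⟨j, rfl⟩ := himg y (by simp)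
          refine Or.inr (Or.inr ?_)
          rcases hq i j (by simp) (by simp) (fun h => hxy (congrArg f h)) with h | h
          · exact ⟨i, by simp [t, h]⟩
          · exact ⟨j, by simp only [t, h]; rw [Finset.pair_comm]⟩
    · rintro (rfl | ⟨i, rfl⟩ | ⟨i, rfl⟩)
      · simp
      · refine ⟨by simp [s], ?_⟩
        intro a b ha hb hab
        simp only [s, Finset.mem_singleton, hf.eq_iff] at ha hb
        exact absurd (ha.trans hb.symm) hab
      · refine ⟨?_, ?_⟩
        · intro x hx
          simp only [t, Finset.mem_insert, Finset.mem_singleton] at hx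
          rcases hx with rfl | rfl <;> simp
        · intro a b ha hb hab
          simp only [t, Finset.mem_insert, Finset.mem_singleton, hf.eq_iff] at ha hb
          rcases ha with rfl | rfl <;> rcases hb with rfl | rfl <;> simp at hab ⊢
  rw [hset, Finset.sum_insert, Finset.sum_union, Finset.sum_image (fun _ _ _ _ h => hsi h),
    Finset.sum_image (fun _ _ _ _ h => hti h)]
  · simp [hsc, htc]
  · rw [Finset.disjoint_left]
    intro Q h1 h2
    simp only [Finset.mem_image, Finset.mem_univ, true_and] at h1 h2
    obtain ⟨i, rfl⟩ := h1
    obtain ⟨j, h⟩ := h2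
    have := htc j
    rw [h, hsc] at this
    omega
  · simp only [Finset.mem_union, Finset.mem_image, Finset.mem_univ, true_and, not_or, not_exists]
    exact ⟨fun i h => by have := hsc i; simp [h] at this, fun i h => by have := htc i; simp [h] at this⟩

end Euler

end FB

namespace FB

section Bridge

variable {K : Type} [Field K] {n : ℕ}

lemma mem_strand {r : ℕ} (g : Fin r → (Fin n → ℕ)) (p j : ℕ) (z : Finset (Fin r) →₀ K) :
    z ∈ EP.strand K g p j ↔ ∀ S, z S ≠ 0 → S.card = p ∧ (∑ x, EP.mlcm g S x) = j := by
  have : EP.strand K g p j =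
      Finsupp.supported K K {S : Finset (Fin r) | S.card = p ∧ (∑ x, EP.mlcm g S x) = j} := by
    rw [Finsupp.supported_eq_span_single]
    unfold EP.strand
    congr 1
    ext c
    constructor
    · rintro ⟨S, h1, h2, rfl⟩
      exact ⟨S, ⟨h1, h2⟩, rfl⟩
    · rintro ⟨S, ⟨h1, h2⟩, rfl⟩
      exact ⟨S, h1, h2, rfl⟩
  rw [this, Finsupp.mem_supported]
  constructor
  · intro h S hS
    exact h (Finsupp.mem_support_iff.2 hS)
  · intro h S hS
    exact h S (Finsupp.mem_support_iff.1 hS)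

lemma mlcm_mono {r : ℕ} (g : Fin r → (Fin n → ℕ)) {S T : Finset (Fin r)} (h : S ⊆ T) (x : Fin n) :
    EP.mlcm g S x ≤ EP.mlcm g T x := Finset.sup_mono h

lemma bdT_single {r : ℕ} (g : Fin r → (Fin n → ℕ)) (S T : Finset (Fin r)) :
    EP.bdT K g (Finsupp.single S 1) T =
      if (∑ x, EP.mlcm g T x) = (∑ x, EP.mlcm g S x) then
        d0 (⇑(Finsupp.single S (1 : K))) T else 0 := by
  have h1 : EP.bdT K g (Finsupp.single S 1) T = ∑ k ∈ S, (if EP.mlcm g (S.erase k) = EP.mlcm g S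
      then (sg K S k) * (if S.erase k = T then 1 else 0) else 0) := by
    unfold EP.bdT
    rw [Finsupp.lsum_single]
    simp only [LinearMap.toSpanSingleton_apply, one_smul, Finsupp.finset_sum_apply]
    refine Finset.sum_congr rfl fun k _ => ?_
    split_ifs with h2 h3
    · simp [sg, h3]
    · simp [sg, h3]
    · simp
  have h2 : ∀ k, (if k ∈ S then (if EP.mlcm g (S.erase k) = EP.mlcm g S
      then (sg K S k) * (if S.erase k = T then 1 else 0) else 0) else 0) =
      if (∑ x, EP.mlcm g T x) = (∑ x, EP.mlcm g S x) then
      (if k ∈ T then 0 else sg K T k * (Finsupp.single S (1 : K)) (insert k T)) else 0 := by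
    intro k
    by_cases hk : k ∈ S ∧ S.erase k = T
    · obtain ⟨hk, rfl⟩ := hk
      have e1 : EP.mlcm g (S.erase k) = EP.mlcm g S ↔
          (∑ x, EP.mlcm g (S.erase k) x) = (∑ x, EP.mlcm g S x) := by
        rw [Finset.sum_eq_sum_iff_of_le (fun x _ => mlcm_mono g (Finset.erase_subset k S) x)]
        simp [funext_iff]
      have e2 : sg K S k = sg K (S.erase k) k := by
        unfold sg
        congr 2
        ext x
        simp only [Finset.mem_filter, Finset.mem_erase]
        exact ⟨fun h => ⟨⟨h.2.ne, h.1⟩, h.2⟩, fun h => ⟨h.1.2, h.2⟩⟩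
      simp [hk, e1, e2, Finset.insert_erase hk]
    · have : ¬ (k ∉ T ∧ insert k T = S) := by
        rintro ⟨h5, rfl⟩
        exact hk ⟨Finset.mem_insert_self _ _, Finset.erase_insert h5⟩
      by_cases hkT : k ∈ T
      · have : ¬ S.erase k = T := by
          rintro rfl; simp at hkT
        simp [hkT, this]
      · have h3 : insert k T ≠ S := fun h => this ⟨hkT, h⟩
        have h4 : (Finsupp.single S (1 : K)) (insert k T) = 0 := by
          rw [Finsupp.single_apply, if_neg (Ne.symm h3)]
        rw [h4]
        by_cases hkS : k ∈ S
        · have : ¬ S.erase k = T := fun h => hk ⟨hkS, h⟩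
          simp [this]
        · simp [hkS]
  rw [h1, ← Finset.univ_inter S, ← Finset.sum_ite_mem, Finset.univ_inter,
    Finset.sum_congr rfl (fun k _ => h2 k)]
  unfold d0
  split_ifs
  · rfl
  · simp

lemma bdT_apply {r : ℕ} (g : Fin r → (Fin n → ℕ)) (p j : ℕ) (z : Finset (Fin r) →₀ K)
    (hz : z ∈ EP.strand K g p j) (T : Finset (Fin r)) :
    EP.bdT K g z T = if (∑ x, EP.mlcm g T x) = j then d0 (⇑z) T else 0 := by
  unfold EP.strand at hz
  induction hz using Submodule.span_induction with
  | mem x h =>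
    obtain ⟨S, _, hj, rfl⟩ := h
    rw [bdT_single, hj]
  | zero => simp [d0]
  | add x y _ _ hx hy =>
    rw [map_add, Finsupp.add_apply, hx, hy, Finsupp.coe_add, d0_add]
    split_ifs <;> simp
  | smul a x _ hx =>
    rw [map_smul, Finsupp.smul_apply, hx, Finsupp.coe_smul, d0_smul]
    split_ifs <;> simp

lemma torRank_eq_zero {r : ℕ} (g : Fin r → (Fin n → ℕ)) (p j : ℕ) :
    EP.torRank K g p j = 0 ↔ Ex K {S : Finset (Fin r) | (∑ x, EP.mlcm g S x) = j} p := by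
  have h1 : EP.torRank K g p j = 0 ↔ EP.strand K g p j ⊓ LinearMap.ker (EP.bdT K g) ≤
      Submodule.map (EP.bdT K g) (EP.strand K g (p+1) j) := by
    unfold EP.torRank
    rw [Nat.sub_eq_zero_iff_le]
    constructor
    · intro h
      have := Submodule.eq_of_le_of_finrank_le inf_le_right h
      exact inf_eq_right.1 this
    · intro h
      rw [inf_eq_right.2 h]
  rw [h1]
  constructor
  · intro h z hz hdz
    set z' : Finset (Fin r) →₀ K := Finsupp.equivFunOnFinite.symm z with hz'
    have hzz : ⇑z' = z := by simp [hz']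
    have hzs : z' ∈ EP.strand K g p j := by
      rw [mem_strand, hzz]
      exact fun S hS => ⟨(hz S hS).2, (hz S hS).1⟩
    obtain ⟨w, hw, hw'⟩ := h ⟨hzs, by
      rw [SetLike.mem_coe, LinearMap.mem_ker]
      ext T
      rw [bdT_apply g p j z' hzs, hzz]
      split_ifs with hT
      · exact hdz T hT
      · rfl⟩
    have hw0 := (mem_strand g (p+1) j w).1 hw
    refine ⟨w, fun S hS => ⟨(hw0 S hS).2, (hw0 S hS).1⟩, ?_⟩
    intro T hT
    have hT : (∑ x, EP.mlcm g T x) = j := hT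
    rw [← hzz, ← hw', bdT_apply g (p+1) j w hw, if_pos hT]
  · rintro h z ⟨hz, hk⟩
    rw [SetLike.mem_coe] at hz
    rw [SetLike.mem_coe, LinearMap.mem_ker] at hk
    have hz0 := (mem_strand g p j z).1 hz
    obtain ⟨w, hw, hw'⟩ := h z (fun S hS => ⟨(hz0 S hS).2, (hz0 S hS).1⟩) (fun T hT => by
      have hT : (∑ x, EP.mlcm g T x) = j := hT
      have := bdT_apply g p j z hz T
      rw [hk, if_pos hT] at this
      exact this.symm)
    set w' : Finset (Fin r) →₀ K := Finsupp.equivFunOnFinite.symm w with hww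
    have hwz : ⇑w' = w := by simp [hww]
    have hws : w' ∈ EP.strand K g (p+1) j := by
      rw [mem_strand, hwz]
      exact fun S hS => ⟨(hw S hS).2, (hw S hS).1⟩
    refine ⟨w', hws, ?_⟩
    ext T
    rw [bdT_apply g (p+1) j w' hws, hwz]
    split_ifs with hT
    · exact hw' T hT
    · by_contra hne
      exact hT (hz0 T (Ne.symm hne)).2

/-- edge vertex sets -/
noncomputable def Dg (G : SimpleGraph (Fin n)) (k : Fin (EP.edgeFins G).card) : Finset (Fin n) :=
  Finset.univ.filter (fun x => x ∈ ((EP.edgeFins G).equivFin.symm k : Sym2 (Fin n)))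

lemma mem_Dg (G : SimpleGraph (Fin n)) (k) (x : Fin n) :
    x ∈ Dg G k ↔ x ∈ ((EP.edgeFins G).equivFin.symm k : Sym2 (Fin n)) := by
  simp [Dg]

lemma mem_edgeFins (G : SimpleGraph (Fin n)) (e : Sym2 (Fin n)) :
    e ∈ EP.edgeFins G ↔ e ∈ G.edgeSet := by
  unfold EP.edgeFins
  simp

lemma Dg_pair (G : SimpleGraph (Fin n)) (k) : ∃ a b, G.Adj a b ∧ Dg G k = {a, b} := by
  have h := ((EP.edgeFins G).equivFin.symm k).2
  rw [mem_edgeFins] at h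
  have hm := mem_Dg G k
  generalize ((EP.edgeFins G).equivFin.symm k : Sym2 (Fin n)) = e at h hm
  induction e using Sym2.ind with
  | _ a b =>
  refine ⟨a, b, h, ?_⟩
  ext x
  rw [hm]; simp

lemma Dg_surj (G : SimpleGraph (Fin n)) (a b) (h : G.Adj a b) : ∃ k, Dg G k = {a, b} := by
  have h' : s(a, b) ∈ EP.edgeFins G := (mem_edgeFins G _).2 h
  refine ⟨(EP.edgeFins G).equivFin ⟨s(a, b), h'⟩, ?_⟩
  ext x
  rw [mem_Dg]; simp

lemma Dg_card (G : SimpleGraph (Fin n)) (k) : (Dg G k).card = 2 := by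
  obtain ⟨a, b, h, e⟩ := Dg_pair G k
  rw [e, Finset.card_pair h.ne]

lemma Dg_inj (G : SimpleGraph (Fin n)) : Function.Injective (Dg G) := by
  intro k k' h
  have : ((EP.edgeFins G).equivFin.symm k : Sym2 (Fin n)) = (EP.edgeFins G).equivFin.symm k' := by
    ext x
    rw [← mem_Dg, ← mem_Dg, h]
  exact (EP.edgeFins G).equivFin.symm.injective (Subtype.ext this)

lemma deg_eq (G : SimpleGraph (Fin n)) (S) :
    (∑ x, EP.mlcm (EP.edgeGens G) S x) = (S.biUnion (Dg G)).card := by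
  have : ∀ x, EP.mlcm (EP.edgeGens G) S x = if x ∈ S.biUnion (Dg G) then 1 else 0 := by
    intro x
    unfold EP.mlcm EP.edgeGens
    apply le_antisymm
    · refine Finset.sup_le fun k hk => ?_
      split_ifs with h1 h2
      · rfl
      · exact absurd (Finset.mem_biUnion.2 ⟨k, hk, (mem_Dg G k x).2 h1⟩) h2
      · simp
      · simp
    · split_ifs with h
      · obtain ⟨k, hk, hx⟩ := Finset.mem_biUnion.1 h
        refine le_trans ?_ (Finset.le_sup hk)
        rw [if_pos ((mem_Dg G k x).1 hx)]
      · simp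
  simp only [this]
  rw [Finset.sum_boole, Finset.filter_univ_mem]
  rfl

lemma linRes_iff (G : SimpleGraph (Fin n)) : EP.gLinRes K G ↔
    ∀ p j, 1 ≤ p → j ≠ p + 1 → Ex K (Fam (Dg G) Finset.univ ∅ j) p := by
  have hfam : ∀ j, {S | (∑ x, EP.mlcm (EP.edgeGens G) S x) = j} = Fam (Dg G) Finset.univ ∅ j := by
    intro j
    ext S
    show (∑ x, EP.mlcm (EP.edgeGens G) S x) = j ↔ _ ∧ _ ∧ _
    rw [deg_eq]; simp
  unfold EP.gLinRes EP.gBetti EP.betti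
  constructor
  · intro h p j hp hj
    rw [← hfam, ← torRank_eq_zero]
    by_contra hne
    obtain ⟨i, rfl⟩ : ∃ i, p = i + 1 := ⟨p - 1, by omega⟩
    exact hj (h i j hne)
  · intro h i j hne
    by_contra hj
    apply hne
    rw [torRank_eq_zero, hfam]
    exact h _ _ (by omega) (by omega)

lemma chordal_LQ (G : SimpleGraph (Fin n)) (hG : EP.Chordal Gᶜ) : ∀ (N : ℕ) (X : Finset (Fin n)),
    X.card = N → LQ (Dg G) (Finset.univ.filter (fun k => Dg G k ⊆ X)) := by
  intro N
  induction N with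
  | zero =>
    intro X hX
    have : Finset.univ.filter (fun k => Dg G k ⊆ X) = ∅ := by
      rw [Finset.filter_eq_empty_iff]
      intro k _ h
      have := Finset.card_le_card h
      rw [Dg_card] at this
      omega
    rw [this]; exact LQ.empty
  | succ N ih =>
    intro X hX
    obtain ⟨v, hv, hs⟩ := dirac hG X (Finset.card_pos.1 (by omega))
    have h := ih (X.erase v) (by rw [Finset.card_erase_of_mem hv]; omega)
    have := LQ.chordal_step (A₀ := Finset.univ.filter (fun k => Dg G k ⊆ X ∧ v ∈ Dg G k)) v
      (Dg_card G) (Dg_inj G) (by simp) h ?_ ?_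
    · convert this using 1
      ext k
      simp only [Finset.mem_filter, Finset.mem_univ, true_and, Finset.mem_union,
        Finset.subset_erase]
      tauto
    · intro e he
      simp only [Finset.mem_filter, Finset.mem_univ, true_and, Finset.subset_erase] at he
      exact he.2
    · intro e he
      simp only [Finset.mem_filter, Finset.mem_univ, true_and, Finset.subset_erase] at he
      obtain ⟨a, b, hab, hD⟩ := Dg_pair G e
      have haX : a ∈ X := he.1 (by simp [hD])
      have hbX : b ∈ X := he.1 (by simp [hD])
      have hva : v ≠ a := by rintro rfl; exact he.2 (by simp [hD])
      have hvb : v ≠ b := by rintro rfl; exact he.2 (by simp [hD])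
      have fin : ∀ a, a ∈ X → a ∈ Dg G e → G.Adj v a →
          ∃ f ∈ Finset.univ.filter (fun k => Dg G k ⊆ X ∧ v ∈ Dg G k), ∃ a ∈ Dg G e, a ∈ Dg G f := by
        intro a haX hae hadj
        obtain ⟨f, hf⟩ := Dg_surj G v a hadj
        refine ⟨f, ?_, a, hae, by simp [hf]⟩
        simp [hf, Finset.insert_subset_iff, hv, haX]
      by_cases h1 : G.Adj v a
      · exact fin a haX (by simp [hD]) h1
      by_cases h2 : G.Adj v b
      · exact fin b hbX (by simp [hD]) h2
      · exfalso
        have := hs a haX b hbX (by simp [h1, hva]) (by simp [h2, hvb]) hab.ne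
        simp [hab] at this

lemma not_cycle (G : SimpleGraph (Fin n)) (hK : EP.gLinRes K G) : EP.Chordal Gᶜ := by
  classical
  rintro l hl ⟨f, hf, hadj⟩
  have : NeZero l := ⟨by omega⟩
  rw [linRes_iff] at hK
  set W : Finset (Fin n) := Finset.univ.image f with hW
  have hWc : W.card = l := by
    rw [hW, Finset.card_image_of_injective _ hf, Finset.card_univ, ZMod.card]
  set F : Set (Finset (Fin (EP.edgeFins G).card)) := {S | S.biUnion (Dg G) = W} with hF
  have hsub : F ⊆ Fam (Dg G) Finset.univ ∅ l := by
    intro S hS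
    have hS : S.biUnion (Dg G) = W := hS
    exact ⟨by simp, by simp, by rw [hS, hWc]⟩
  have hcomp : ∀ S ∈ F, ∀ T ∈ Fam (Dg G) Finset.univ ∅ l, S ⊆ T ∨ T ⊆ S → T ∈ F := by
    rintro S hS T ⟨_, _, hT⟩ h
    have hS : S.biUnion (Dg G) = W := hS
    show T.biUnion (Dg G) = W
    rcases h with h | h
    · rw [← hS]
      refine (Finset.eq_of_subset_of_card_le
        (Finset.biUnion_subset_biUnion_of_subset_left _ h) ?_).symm
      rw [hT, hS, hWc]
    · rw [← hS]
      refine Finset.eq_of_subset_of_card_le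
        (Finset.biUnion_subset_biUnion_of_subset_left _ h) ?_
      rw [hT, hS, hWc]
  have hcvx : Cvx F := fun S T U hS hU h1 h2 =>
    hcomp S hS T (Fam_cvx _ _ _ _ S T U (hsub hS) (hsub hU) h1 h2) (Or.inl h1)
  have h0 : ∅ ∉ F := by
    intro h
    have h : (∅ : Finset (Fin (EP.edgeFins G).card)).biUnion (Dg G) = W := h
    rw [Finset.biUnion_empty] at h
    rw [← h] at hWc
    simp at hWc; omega
  obtain ⟨e, he⟩ := euler K F hcvx h0 (l - 1) (fun p hp hpl =>
    Ex_component hsub hcomp (hK p l hp (by omega)))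
  have h1 := cover_sum (Dg G) W
  have h2 := cyc_sum l hl f hf (fun Q => ∀ e, ¬ Dg G e ⊆ Q) (by
    intro Q hQ
    constructor
    · intro h i j hi hj hij
      rw [← hadj, SimpleGraph.compl_adj]
      refine ⟨fun h => hij (hf h), fun h' => ?_⟩
      obtain ⟨k, hk⟩ := Dg_surj G _ _ h'
      exact h k (by rw [hk, Finset.insert_subset_iff, Finset.singleton_subset_iff]; exact ⟨hi, hj⟩)
    · intro h e he
      obtain ⟨a, b, hab, hD⟩ := Dg_pair G e
      rw [hD, Finset.insert_subset_iff, Finset.singleton_subset_iff] at he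
      obtain ⟨i, _, rfl⟩ := Finset.mem_image.1 (hQ he.1)
      obtain ⟨j, _, rfl⟩ := Finset.mem_image.1 (hQ he.2)
      have := (hadj i j).2 (h i j he.1 he.2 (fun hij => hab.ne (congrArg f hij)))
      rw [SimpleGraph.compl_adj] at this
      exact this.2 hab)
  replace he : (-1 : ℤ) ^ l = (-1) ^ (l - 1) * e := by
    rw [← he]
    refine Eq.trans ?_ (Eq.trans h1.symm ?_)
    · rw [hWc]
      symm
      convert mul_one _ using 2
      convert h2
    · refine Finset.sum_congr ?_ fun _ _ => rfl
      ext S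
      simp [hF]
  obtain ⟨m, rfl⟩ : ∃ m, l = m + 1 := ⟨l - 1, by omega⟩
  rw [Nat.add_sub_cancel, pow_succ] at he
  have := mul_left_cancel₀ (pow_ne_zero m (by norm_num : (-1 : ℤ) ≠ 0)) he
  omega

end Bridge

end FB

theorem statement1 (n : ℕ) (G : SimpleGraph (Fin n)) :
    ((∃ (K : Type) (inst : Field K), @EP.gLinRes K inst n G) → EP.Chordal Gᶜ) ∧
    (EP.Chordal Gᶜ → ∀ (K : Type) [Field K], EP.gLinRes K G) := by
  refine ⟨?_, ?_⟩
  · rintro ⟨K, inst, h⟩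
    exact FB.not_cycle G h
  · intro h K _
    rw [FB.linRes_iff]
    intro p j hp hj
    have := FB.chordal_LQ G h _ Finset.univ rfl
    simp only [Finset.subset_univ, Finset.filter_true] at this
    exact this.ex (FB.Dg_card G) hp hj
end
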